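/- Let d ≥ 1, D := {1,...,d} and let B ⊆ D be nonempty. If f : I^d → ℝ is measurable with ∫_{I^d} |f| log^{|B|}(1+|f|) < ∞, then ‖(L_{n_B}∘R_{n_{B'}})(f) − f‖_{L^1(I^d)} → 0 as min_{j∈D} n_j → ∞. -/

import Mathlib

open MeasureTheory Filter

noncomputable section

/-- The unit cube `[0,1)^d`. -/
def unitCube (d : ℕ) : Set (Fin d → ℝ) := Set.univ.pi fun _ => Set.Ico (0:ℝ) 1

/-- Lebesgue measure restricted to the unit cube `[0,1)^d`. -/
def cubeMeasure (d : ℕ) : Measure (Fin d → ℝ) := volume.restrict (unitCube d)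

/-- The `1`-periodic function equal to `1` on `[0,1/2)` and to `-1` on `[1/2,1)`. -/
def r0 (x : ℝ) : ℝ := if Int.fract x < 1/2 then 1 else -1

/-- The Rademacher functions. -/
def rademacher (n : ℕ) (x : ℝ) : ℝ := r0 (2 ^ n * x)

/-- The Walsh functions (in Paley enumeration, via binary digits). -/
def walsh (n : ℕ) (x : ℝ) : ℝ :=
  ∏ k ∈ Finset.range (n + 1), if n.testBit k then rademacher k x else 1

/-- The Walsh–Dirichlet kernel `D_n`. -/
def dirichletKernel (n : ℕ) (x : ℝ) : ℝ := ∑ k ∈ Finset.range n, walsh k x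

/-- `l_n = ∑_{k=1}^{n-1} 1/k`. -/
def logSum (n : ℕ) : ℝ := ∑ k ∈ Finset.Icc 1 (n - 1), (1 : ℝ) / k

/-- The Nörlund logarithmic kernel `F_n`. -/
def FKernel (n : ℕ) (u : ℝ) : ℝ :=
  (1 / logSum n) * ∑ i ∈ Finset.Ico 1 n, dirichletKernel (n - i) u / i

/-- The Riesz logarithmic kernel `G_n`. -/
def GKernel (n : ℕ) (u : ℝ) : ℝ :=
  (1 / logSum n) * ∑ i ∈ Finset.Ico 1 n, dirichletKernel i u / i

/-- Walsh–Fourier coefficient of `f` on the unit cube. -/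
def walshCoef {d : ℕ} (f : (Fin d → ℝ) → ℝ) (j : Fin d → ℕ) : ℝ :=
  ∫ x, f x * ∏ i, walsh (j i) (x i) ∂(cubeMeasure d)

/-- Rectangular partial sums of the multiple Walsh–Fourier series. -/
def rectPartialSum {d : ℕ} (f : (Fin d → ℝ) → ℝ) (N : Fin d → ℕ) (x : Fin d → ℝ) : ℝ :=
  ∑ j ∈ Fintype.piFinset (fun i => Finset.range (N i)),
    walshCoef f j * ∏ i, walsh (j i) (x i)

/-- The mixed logarithmic means `(L_{n_B} ∘ R_{n_{B'}})(f)`. -/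
def mixedLogMean {d : ℕ} (B : Finset (Fin d)) (f : (Fin d → ℝ) → ℝ)
    (n : Fin d → ℕ) (x : Fin d → ℝ) : ℝ :=
  (∏ j, logSum (n j))⁻¹ *
    ∑ i ∈ Fintype.piFinset (fun j => Finset.Ico 1 (n j)),
      rectPartialSum f (fun j => if j ∈ B then n j - i j else i j) x / ∏ j, (i j : ℝ)

/-- A Young function: convex, continuous, even, vanishing at `0`, with
`Q(u)/u → ∞` at `+∞` and `Q(u)/u → 0` at `0`. -/
structure YoungFunction where
  toFun : ℝ → ℝ
  nonneg : ∀ u, 0 ≤ toFun u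
  convexOn : ConvexOn ℝ Set.univ toFun
  continuous : Continuous toFun
  even : ∀ u, toFun (-u) = toFun u
  map_zero : toFun 0 = 0
  tendsto_atTop : Tendsto (fun u => toFun u / u) atTop atTop
  tendsto_zero : Tendsto (fun u => toFun u / u) (nhdsWithin 0 {(0:ℝ)}ᶜ) (nhds 0)

/-- The set of admissible constants `k` in the Luxemburg norm of `f`. -/
def orliczSet {d : ℕ} (Q : YoungFunction) (f : (Fin d → ℝ) → ℝ) : Set ℝ :=
  {k | 0 < k ∧ Integrable (fun x => Q.toFun (|f x| / k)) (cubeMeasure d) ∧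
    ∫ x, Q.toFun (|f x| / k) ∂(cubeMeasure d) ≤ 1}

/-- `f` belongs to the Orlicz space `L_Q(I^d)`. -/
def MemOrlicz {d : ℕ} (Q : YoungFunction) (f : (Fin d → ℝ) → ℝ) : Prop :=
  Measurable f ∧ (orliczSet Q f).Nonempty

/-- The Luxemburg norm on the Orlicz space `L_Q(I^d)`. -/
def orliczNorm {d : ℕ} (Q : YoungFunction) (f : (Fin d → ℝ) → ℝ) : ℝ :=
  sInf (orliczSet Q f)

/-- `p_n = 2^{2n} + 2^{2n-2} + ⋯ + 2^0`. -/
def pIdx (n : ℕ) : ℕ := ∑ k ∈ Finset.range (n + 1), 4 ^ k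

/-- `m̃ = ⌊ l_{p_{⌊m/2⌋}-1}/16 - 2^15 ⌋`. -/
def mTilde (m : ℕ) : ℤ := ⌊logSum (pIdx (m / 2) - 1) / 16 - 2 ^ 15⌋

/-- `m₀ = min{m : m̃ > 1}`. -/
def m₀ : ℕ := sInf {m : ℕ | 1 < mTilde m}

/-- The set `Ω_n`. -/
def Omega (n : ℕ) : Set ℝ :=
  ⋃ m ∈ Finset.Icc n (2 * n),
    Set.Ico ((2:ℝ) ^ (-(m:ℤ) - 1) + (2:ℝ) ^ (-(m:ℤ) - mTilde m)) ((2:ℝ) ^ (-(m:ℤ)))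

/-- `k`-th binary digit of `x` (the expansion not terminating in `1`'s). -/
def binDigit (k : ℕ) (x : ℝ) : ℕ := (⌊x * 2 ^ (k + 1)⌋).toNat % 2

/-- Dyadic addition on `[0,1)`. -/
def dyadicAdd (x t : ℝ) : ℝ :=
  ∑' k : ℕ, |(binDigit k x : ℝ) - (binDigit k t : ℝ)| / 2 ^ (k + 1)

/-- Dyadic convolution `f ∗ K` on `[0,1)`. -/
def dyadicConv (f K : ℝ → ℝ) (x : ℝ) : ℝ :=
  ∫ t in Set.Ico (0:ℝ) 1, f t * K (dyadicAdd x t)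

/-- Lebesgue measure restricted to `[0,1)`. -/
def unitMeasure : Measure ℝ := volume.restrict (Set.Ico (0:ℝ) 1)

/-- A set `A ⊆ L_Q(I^d)` is nowhere dense w.r.t. the Luxemburg norm. -/
def OrliczNowhereDense {d : ℕ} (Q : YoungFunction) (A : Set ((Fin d → ℝ) → ℝ)) : Prop :=
  ∀ f, MemOrlicz Q f → ∀ ε > 0, ∃ g, MemOrlicz Q g ∧ ∃ δ > 0,
    (∀ h, MemOrlicz Q h → orliczNorm Q (h - g) < δ → orliczNorm Q (h - f) < ε) ∧
    (∀ h, MemOrlicz Q h → orliczNorm Q (h - g) < δ → h ∉ A)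

/-- A set `A ⊆ L_Q(I^d)` is of first Baire category (meager) w.r.t. the Luxemburg norm. -/
def OrliczMeager {d : ℕ} (Q : YoungFunction) (A : Set ((Fin d → ℝ) → ℝ)) : Prop :=
  ∃ F : ℕ → Set ((Fin d → ℝ) → ℝ), (∀ k, OrliczNowhereDense Q (F k)) ∧ A ⊆ ⋃ k, F k

/-! ### The Burkholder function -/

theorem EE_ineq (n : ℕ) (v y z : ℝ) (hv : 0 ≤ v) (hy : v ≤ y) (hz : v ≤ z) :
    0 ≤ y ^ (n+1) - z ^ (n+1) - (n+1) * z ^ n * (y - z) ∧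
    (n+2) * v * (y ^ (n+1) - z ^ (n+1) - (n+1) * z ^ n * (y - z)) ≤
      n * (y ^ (n+2) - z ^ (n+2) - (n+2) * z ^ (n+1) * (y - z)) := by
  have hy0 : 0 ≤ y := hv.trans hy
  have hz0 : 0 ≤ z := hv.trans hz
  induction n with
  | zero => constructor <;> simp <;> ring_nf <;> simp
  | succ n ih =>
    obtain ⟨h1, h2⟩ := ih
    set E1 := y ^ (n+1) - z ^ (n+1) - (n+1) * z ^ n * (y - z) with hE1
    have e2 : y ^ (n+1+1) - z ^ (n+1+1) - ((n+1:ℕ)+1) * z ^ (n+1) * (y - z)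
        = y * E1 + (n+1) * z^n * (y-z)^2 := by
      rw [hE1]; push_cast; ring
    have hd : 0 ≤ (n+1) * z^n * (y-z)^2 := by positivity
    have e3 : y ^ (n+1+2) - z ^ (n+1+2) - ((n+1:ℕ)+2) * z ^ (n+1+1) * (y - z)
        = y * (y * E1 + (n+1) * z^n * (y-z)^2) + (n+2) * z^(n+1) * (y-z)^2 := by
      rw [hE1]; push_cast; ring
    have e4 : y ^ (n+2) - z ^ (n+2) - (n+2) * z ^ (n+1) * (y - z)
        = y * E1 + (n+1) * z^n * (y-z)^2 := by
      rw [hE1]; ring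
    rw [e4] at h2
    rw [e2, e3]
    have hE2 : 0 ≤ y * E1 + (n+1) * z^n * (y-z)^2 := by positivity
    refine ⟨hE2, ?_⟩
    push_cast
    have a1 := mul_le_mul_of_nonneg_left h2 hy0
    have a2 : 0 ≤ (y - v) * (y * E1 + (n+1) * z^n * (y-z)^2) :=
      mul_nonneg (by linarith) hE2
    have a3 : 0 ≤ (n+1) * (n+2) * z^n * (y-z)^2 * (z - v) :=
      mul_nonneg (by positivity) (by linarith)
    have hzz : z^(n+1) = z^n * z := pow_succ _ _
    rw [hzz]
    nlinarith [a1, a2, a3]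

def UU (n : ℕ) (u v : ℝ) : ℝ :=
  -(n:ℝ) * (max |u| |v|)^(n+2) - (n+2) * (max |u| |v|)^n * (u*v)

theorem UU_comm (n : ℕ) (u v : ℝ) : UU n u v = UU n v u := by
  simp only [UU, max_comm |u| |v|, mul_comm u v]

theorem UU_neg (n : ℕ) (u v : ℝ) : UU n (-u) (-v) = UU n u v := by
  simp [UU]

theorem UU_of_abs_le (n : ℕ) {u v : ℝ} (hv : 0 ≤ v) (h : |u| ≤ v) :
    UU n u v = -(n:ℝ) * v^(n+2) - (n+2) * v^(n+1) * u := by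
  simp only [UU, abs_of_nonneg hv, max_eq_right h]; ring

theorem UU_of_le (n : ℕ) {u v : ℝ} (hv : 0 ≤ v) (h : v ≤ u) :
    UU n u v = -(n:ℝ) * u^(n+2) - (n+2) * u^(n+1) * v := by
  have h0 : 0 ≤ u := hv.trans h
  simp only [UU, abs_of_nonneg hv, abs_of_nonneg h0, max_eq_left h]; ring

theorem UU_of_le_neg (n : ℕ) {y v : ℝ} (hv : 0 ≤ v) (h : v ≤ y) :
    UU n (-y) v = -(n:ℝ) * y^(n+2) + (n+2) * y^(n+1) * v := by
  have h0 : 0 ≤ y := hv.trans h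
  simp only [UU, abs_of_nonneg hv, abs_neg, abs_of_nonneg h0, max_eq_left h]; ring

theorem UU_le_affine (n : ℕ) (u : ℝ) {v : ℝ} (hv : 0 ≤ v) :
    UU n u v ≤ -(n:ℝ) * v^(n+2) - (n+2) * v^(n+1) * u := by
  rcases le_total |u| v with h | h
  · rw [UU_of_abs_le n hv h]
  · rcases le_total 0 u with hu | hu
    · rw [abs_of_nonneg hu] at h
      rw [UU_of_le n hv h]
      have h1 : v^(n+2) ≤ u^(n+2) := by gcongr
      have h2 : v^n ≤ u^n := by gcongr
      have h3 : 0 ≤ (n+2) * u * v * (u^n - v^n) := mul_nonneg (by positivity) (by linarith)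
      have h4 : 0 ≤ n * (u^(n+2) - v^(n+2)) := mul_nonneg (by positivity) (by linarith)
      rw [pow_succ u n, pow_succ v n]
      nlinarith
    · rw [abs_of_nonpos hu] at h
      obtain ⟨y, rfl⟩ : ∃ y, u = -y := ⟨-u, by ring⟩
      rw [neg_neg] at h
      rw [UU_of_le_neg n hv h]
      have := (EE_ineq n v y v hv h le_rfl).2
      ring_nf at this ⊢
      nlinarith

theorem UU_super (n : ℕ) (u : ℝ) {v : ℝ} (hv : 0 ≤ v) :
    ∃ s : ℝ, ∀ w, UU n w v ≤ UU n u v + s * (w - u) := by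
  rcases le_total |u| v with h | h
  · refine ⟨-(n+2) * v^(n+1), fun w => ?_⟩
    rw [UU_of_abs_le n hv h]
    have := UU_le_affine n w hv
    nlinarith
  · rcases le_total 0 u with hu | hu
    · rw [abs_of_nonneg hu] at h
      set s := -(n:ℝ) * (n+2) * u^(n+1) - (n+2) * (n+1) * u^n * v with hs
      have key : ∀ w, v ≤ w → -(n:ℝ) * w^(n+2) - (n+2) * w^(n+1) * v ≤ UU n u v + s * (w - u) := by
        intro w hw
        rw [UU_of_le n hv h]
        have h1 := (EE_ineq n v w u hv hw h).1
        have h2 := (EE_ineq (n+1) v w u hv hw h).1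
        have h3 : 0 ≤ (n+2) * v * (w ^ (n+1) - u ^ (n+1) - (n+1) * u ^ n * (w - u)) :=
          mul_nonneg (by positivity) h1
        have h4 : 0 ≤ n * (w ^ (n+1+1) - u ^ (n+1+1) - ((n+1:ℕ)+1) * u ^ (n+1) * (w - u)) :=
          mul_nonneg (by positivity) h2
        rw [hs]
        push_cast at h4
        ring_nf at h3 h4 ⊢
        nlinarith
      refine ⟨s, fun w => ?_⟩
      rcases le_total v w with hw | hw
      · rw [UU_of_le n hv hw]; exact key w hw
      · have h1 := UU_le_affine n w hv
        have h2 := key v le_rfl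
        have h3 : s ≤ -(n+2) * v^(n+1) := by
          have : v^n ≤ u^n := by gcongr
          have h4 : 0 ≤ (n+2) * v * (u^n - v^n) := mul_nonneg (by positivity) (by linarith)
          have h5 : 0 ≤ (n:ℝ) * (n+2) * u^(n+1) := by positivity
          have h6 : 0 ≤ (n:ℝ) * (n+2) * u^n * v := by positivity
          rw [hs, pow_succ v n]
          nlinarith
        have h4 := mul_le_mul_of_nonpos_right h3 (show w - v ≤ 0 by linarith)
        rw [pow_succ v (n+1)] at *
        nlinarith
    · rw [abs_of_nonpos hu] at h
      obtain ⟨y, rfl⟩ : ∃ y, u = -y := ⟨-u, by ring⟩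
      rw [neg_neg] at h
      set s := -(n:ℝ) * (n+2) * y^(n+1) + (n+2) * (n+1) * y^n * v with hs
      have key : ∀ w, v ≤ w →
          -(n:ℝ) * w^(n+2) + (n+2) * w^(n+1) * v ≤ UU n (-y) v + s * (w - y) := by
        intro w hw
        rw [UU_of_le_neg n hv h]
        have h1 := (EE_ineq n v w y hv hw h).2
        rw [hs]
        ring_nf at h1 ⊢
        nlinarith
      refine ⟨-s, fun w => ?_⟩
      obtain ⟨w, rfl⟩ : ∃ y, w = -y := ⟨-w, by ring⟩
      have e : -s * (-w - -y) = s * (w - y) := by ring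
      rw [e]
      rcases le_total v w with hw | hw
      · rw [UU_of_le_neg n hv hw]; exact key w hw
      · have h1 := UU_le_affine n (-w) hv
        have h2 := key v le_rfl
        have h3 : s ≤ (n+2) * v^(n+1) := by
          have h1 := (EE_ineq n 0 v y le_rfl hv (hv.trans h)).1
          have h4 : 0 ≤ (n+2) * (v ^ (n+1) - y ^ (n+1) - (n+1) * y ^ n * (v - y)) :=
            mul_nonneg (by positivity) h1
          rw [hs]
          ring_nf at h4 ⊢
          nlinarith
        have h4 := mul_le_mul_of_nonpos_right h3 (show w - v ≤ 0 by linarith)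
        rw [pow_succ v (n+1)] at *
        nlinarith

theorem UU_mid_left (n : ℕ) (u h v : ℝ) : UU n (u+h) v + UU n (u-h) v ≤ 2 * UU n u v := by
  rcases le_total 0 v with hv | hv
  · obtain ⟨s, hs⟩ := UU_super n u hv
    have h1 := hs (u+h)
    have h2 := hs (u-h)
    nlinarith
  · obtain ⟨s, hs⟩ := UU_super n (-u) (neg_nonneg.2 hv)
    have h1 := hs (-(u+h))
    have h2 := hs (-(u-h))
    rw [UU_neg, UU_neg] at h1 h2
    nlinarith

theorem UU_mid_right (n : ℕ) (u h v : ℝ) : UU n u (v+h) + UU n u (v-h) ≤ 2 * UU n u v := by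
  rw [UU_comm n u, UU_comm n u, UU_comm n u]; exact UU_mid_left n v h u

theorem UU_zero_left (n : ℕ) (v : ℝ) : UU n 0 v ≤ 0 := by
  simp only [UU, zero_mul, mul_zero, sub_zero]
  have : 0 ≤ (n:ℝ) * (max |(0:ℝ)| |v|)^(n+2) := by positivity
  linarith

/-- Majorization. -/
theorem UU_major (n : ℕ) (u v : ℝ) :
    |u|^(n+2) ≤ UU n u v + (20 * (n+2) * |u+v|)^(n+2) := by
  set q : ℝ := n + 2 with hq
  have hn : (0:ℝ) ≤ n := Nat.cast_nonneg n
  have hq2 : 2 ≤ q := by rw [hq]; linarith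
  set M := max |u| |v| with hM
  have hM0 : 0 ≤ M := le_max_of_le_left (abs_nonneg u)
  have huM : |u| ≤ M := le_max_left _ _
  have hvM : |v| ≤ M := le_max_right _ _
  have hU : UU n u v = M^n * (-(n:ℝ) * M^2 - q * (u*v)) := by
    simp only [UU, ← hM, hq]; ring
  rcases le_total (|u|) (4 * q * |u+v|) with h | h
  · -- large sum
    set w := |u+v| with hw
    have hw0 : 0 ≤ w := abs_nonneg _
    have hvle : |v| ≤ w + |u| := by
      have : v = (u+v) - u := by ring
      calc |v| = |(u+v) - u| := by rw [← this]
        _ ≤ |u+v| + |u| := abs_sub _ _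
    have hMle : M ≤ 5 * q * w := by
      apply max_le <;> nlinarith
    have h1 : -(2 * q) * M^(n+2) ≤ UU n u v := by
      rw [hU]
      have : u * v ≤ M * M := by
        calc u * v ≤ |u * v| := le_abs_self _
          _ = |u| * |v| := abs_mul _ _
          _ ≤ M * M := by gcongr
      have h2 : -(2*q) * M^2 ≤ (-(n:ℝ) * M^2 - q * (u*v)) := by nlinarith [sq_nonneg M]
      calc -(2 * q) * M^(n+2) = M^n * (-(2*q) * M^2) := by ring
        _ ≤ _ := by gcongr
    have h2 : |u|^(n+2) ≤ M^(n+2) := by gcongr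
    have h3 : M^(n+2) ≤ (5*q*w)^(n+2) := by gcongr
    have h4 : 1 + 2 * q ≤ 4^(n+2) := by
      have := one_add_mul_le_pow (show (-2:ℝ) ≤ 3 by norm_num) (n+2)
      push_cast at this
      norm_num at this
      rw [hq]; linarith
    have h5 : (20 * q * w)^(n+2) = 4^(n+2) * (5*q*w)^(n+2) := by
      rw [← mul_pow]; ring
    rw [h5]
    have h6 : 0 ≤ (5*q*w)^(n+2) := by positivity
    nlinarith
  · set w := |u+v| with hw
    have hw0 : 0 ≤ w := abs_nonneg _
    have h1 : 0 ≤ (20 * q * w)^(n+2) := by positivity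
    suffices |u|^(n+2) ≤ UU n u v by linarith
    rw [hU]
    have hqw : q * w ≤ |u|/4 := by linarith
    have huv : u * v ≤ |u| * w - |u|^2 := by
      have : u * v = u * (u+v) - u^2 := by ring
      rw [this, sq_abs]
      have : u * (u+v) ≤ |u| * w := by
        rw [hw, ← abs_mul]; exact le_abs_self _
      linarith
    have hvle : |v| ≤ w + |u| := by
      have : v = (u+v) - u := by ring
      calc |v| = |(u+v) - u| := by rw [← this]
        _ ≤ |u+v| + |u| := abs_sub _ _
    have hMle : M ≤ w + |u| := max_le (by linarith) hvle
    have hu0 := abs_nonneg u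
    have h2 : M^2 ≤ (w+|u|)^2 := by gcongr
    have hnq : (n:ℝ) = q - 2 := by rw [hq]; ring
    have hw8 : w ≤ |u|/8 := by nlinarith
    have h3 : |u|^2 ≤ -(n:ℝ) * M^2 - q * (u*v) := by
      have a1 : (n:ℝ) * M^2 ≤ n * (w+|u|)^2 := by gcongr
      have a2 : q * (u*v) ≤ q * (|u| * w - |u|^2) := by gcongr
      rw [hnq] at a1 ⊢
      have a3 : q * w * |u| ≤ |u|/4 * |u| := by gcongr
      have a4 : q * w * w ≤ |u|/4 * (|u|/8) := by gcongr
      nlinarith [mul_nonneg hw0 hu0, sq_nonneg w]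
    calc |u|^(n+2) = |u|^n * |u|^2 := by ring
      _ ≤ M^n * (-(n:ℝ) * M^2 - q * (u*v)) := by gcongr

/-! ### Finite model: Walsh functions on `{0,1}^A` -/

def sg (b : Bool) : ℝ := if b then -1 else 1

theorem sg_mul_self (b : Bool) : sg b * sg b = 1 := by cases b <;> simp [sg]

def WF {A : ℕ} (k : ℕ) (x : Fin A → Bool) : ℝ :=
  ∏ j : Fin A, if k.testBit j then sg (x j) else 1

theorem WF_mul_self {A : ℕ} (k : ℕ) (x : Fin A → Bool) : WF k x * WF k x = 1 := by
  unfold WF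
  rw [← Finset.prod_mul_distrib]
  apply Finset.prod_eq_one
  intro j _
  split_ifs
  · exact sg_mul_self _
  · ring

theorem WF_abs {A : ℕ} (k : ℕ) (x : Fin A → Bool) : |WF k x| = 1 := by
  have h := WF_mul_self k x
  rw [← abs_mul_abs_self] at h
  nlinarith [abs_nonneg (WF k x)]

theorem WF_zero {A : ℕ} (x : Fin A → Bool) : WF 0 x = 1 := by simp [WF]

theorem WF_even {A : ℕ} (l : ℕ) (e : Bool) (x : Fin A → Bool) :
    WF (2*l) (Fin.cons e x : Fin (A+1) → Bool) = WF l x := by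
  unfold WF
  rw [Fin.prod_univ_succ]
  simp [Nat.testBit_succ]

theorem WF_odd {A : ℕ} (l : ℕ) (e : Bool) (x : Fin A → Bool) :
    WF (2*l+1) (Fin.cons e x : Fin (A+1) → Bool) = sg e * WF l x := by
  unfold WF
  rw [Fin.prod_univ_succ]
  have : (2*l+1)/2 = l := by omega
  simp [Nat.testBit_succ, this]

theorem sum_cons {α : Type*} [Fintype α] {A : ℕ} (F : (Fin (A+1) → α) → ℝ) :
    ∑ x, F x = ∑ e : α, ∑ x : Fin A → α, F (Fin.cons e x) := by
  rw [← Fintype.sum_prod_type']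
  exact (Fintype.sum_equiv (Fin.consEquiv (fun _ => α)) _ _ (fun _ => rfl)).symm

theorem sum_range_two_mul (f : ℕ → ℝ) (M : ℕ) :
    ∑ k ∈ Finset.range (2*M), f k = ∑ l ∈ Finset.range M, (f (2*l) + f (2*l+1)) := by
  induction M with
  | zero => simp
  | succ M ih =>
    rw [Finset.sum_range_succ, ← ih, show 2*(M+1) = 2*M+1+1 by ring, Finset.sum_range_succ,
      Finset.sum_range_succ]; ring

def kerF {A : ℕ} (N : ℕ) (x t : Fin A → Bool) : ℝ :=
  ∑ k ∈ Finset.range N, WF k x * WF k t * (WF N x * WF N t)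

theorem kerF_even {A : ℕ} (M : ℕ) (e f : Bool) (x t : Fin A → Bool) :
    kerF (2*M) (Fin.cons e x : Fin (A+1) → Bool) (Fin.cons f t) =
      (1 + sg e * sg f) * kerF M x t := by
  unfold kerF
  rw [sum_range_two_mul, Finset.mul_sum]
  refine Finset.sum_congr rfl fun l _ => ?_
  simp only [WF_even, WF_odd]; ring

theorem kerF_odd {A : ℕ} (M : ℕ) (e f : Bool) (x t : Fin A → Bool) :
    kerF (2*M+1) (Fin.cons e x : Fin (A+1) → Bool) (Fin.cons f t) =
      (1 + sg e * sg f) * kerF M x t + sg e * sg f := by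
  unfold kerF
  rw [Finset.sum_range_succ, sum_range_two_mul, Finset.mul_sum]
  simp only [WF_even, WF_odd]
  congr 1
  · refine Finset.sum_congr rfl fun l _ => ?_
    have h1 := sg_mul_self e
    have h2 := sg_mul_self f
    have : sg e * sg f * (sg e * sg f) = 1 := by
      calc _ = (sg e * sg e) * (sg f * sg f) := by ring
        _ = 1 := by rw [h1, h2]; ring
    linear_combination (WF l x * WF l t * WF M x * WF M t) * this
  · linear_combination (sg e * sg f * WF M t * WF M t) * WF_mul_self M x
      + (sg e * sg f) * WF_mul_self M t

def MN {A : ℕ} (N : ℕ) (g : (Fin A → Bool) → ℝ) (x : Fin A → Bool) : ℝ :=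
  ((2:ℝ)^A)⁻¹ * ∑ t, kerF N x t * g t

def avF {A : ℕ} (g : (Fin A → Bool) → ℝ) : ℝ := ((2:ℝ)^A)⁻¹ * ∑ t, g t

theorem avF_succ {A : ℕ} (g : (Fin (A+1) → Bool) → ℝ) :
    avF g = (avF (fun x => g (Fin.cons false x)) + avF (fun x => g (Fin.cons true x))) / 2 := by
  unfold avF
  rw [sum_cons, Fintype.sum_bool, pow_succ]
  field_simp; ring

def dlF {A : ℕ} (g : (Fin (A+1) → Bool) → ℝ) : ℝ :=
  (avF (fun x => g (Fin.cons false x)) - avF (fun x => g (Fin.cons true x))) / 2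

theorem avF_sub {A : ℕ} (g : (Fin (A+1) → Bool) → ℝ) (e : Bool) :
    avF (fun x => g (Fin.cons e x)) = avF g + sg e * dlF g := by
  rw [avF_succ, dlF]; cases e <;> simp [sg] <;> ring

theorem MN_even {A : ℕ} (M : ℕ) (g : (Fin (A+1) → Bool) → ℝ) (e : Bool) (x : Fin A → Bool) :
    MN (2*M) g (Fin.cons e x) = MN M (fun x => g (Fin.cons e x)) x := by
  unfold MN
  rw [sum_cons, Fintype.sum_bool, pow_succ]
  simp only [kerF_even, mul_assoc, ← Finset.mul_sum]
  cases e <;> simp [sg] <;> field_simp <;> ring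

theorem MN_odd {A : ℕ} (M : ℕ) (g : (Fin (A+1) → Bool) → ℝ) (e : Bool) (x : Fin A → Bool) :
    MN (2*M+1) g (Fin.cons e x) = sg e * dlF g + MN M (fun x => g (Fin.cons e x)) x := by
  unfold MN dlF avF
  rw [sum_cons, Fintype.sum_bool, pow_succ]
  have hk : ∀ (f : Bool) (t : Fin A → Bool),
      kerF (2*M+1) (Fin.cons e x : Fin (A+1) → Bool) (Fin.cons f t) * g (Fin.cons f t) =
      (1 + sg e * sg f) * (kerF M x t * g (Fin.cons f t)) + (sg e * sg f) * g (Fin.cons f t) := by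
    intro f t; rw [kerF_odd]; ring
  simp only [hk, Finset.sum_add_distrib, ← Finset.mul_sum]
  cases e <;> simp [sg] <;> field_simp <;> ring

theorem bellman (n A : ℕ) : ∀ (N : ℕ) (_ : N < 2^A) (g : (Fin A → Bool) → ℝ) (a b : ℝ),
    ∑ x, UU n (a + MN N g x) (b + (g x - avF g - MN N g x)) ≤ 2^A * UU n a b := by
  induction A with
  | zero =>
    intro N hN g a b
    have : N = 0 := by simpa using hN
    subst this
    simp [MN, kerF, avF, Subsingleton.elim default ![]]
  | succ A ih =>
    intro N hN g a b
    rw [sum_cons, Fintype.sum_bool]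
    rw [pow_succ] at hN
    obtain ⟨M, rfl | rfl⟩ := Nat.even_or_odd' N
    · have h1 := ih M (by omega) (fun x => g (Fin.cons true x)) a (b - dlF g)
      have h2 := ih M (by omega) (fun x => g (Fin.cons false x)) a (b + dlF g)
      rw [avF_sub] at h1 h2
      simp only [MN_even]
      have h3 := mul_le_mul_of_nonneg_left (UU_mid_right n a (dlF g) b)
        (show (0:ℝ) ≤ 2^A by positivity)
      calc _ = _ := ?_
        _ ≤ _ := add_le_add h1 h2
        _ ≤ _ := by rw [pow_succ]; linarith
      congr 1 <;> refine Finset.sum_congr rfl fun x _ => ?_ <;> congr 1 <;> simp [sg] <;> ring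
    · have h1 := ih M (by omega) (fun x => g (Fin.cons true x)) (a - dlF g) b
      have h2 := ih M (by omega) (fun x => g (Fin.cons false x)) (a + dlF g) b
      rw [avF_sub] at h1 h2
      simp only [MN_odd]
      have h3 := mul_le_mul_of_nonneg_left (UU_mid_left n a (dlF g) b)
        (show (0:ℝ) ≤ 2^A by positivity)
      calc _ = _ := ?_
        _ ≤ _ := add_le_add h1 h2
        _ ≤ _ := by rw [pow_succ]; linarith
      congr 1 <;> refine Finset.sum_congr rfl fun x _ => ?_ <;> congr 1 <;> simp [sg] <;> ring

theorem MN_bound (n A N : ℕ) (hN : N < 2^A) (g : (Fin A → Bool) → ℝ) :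
    ∑ x, |MN N g x|^(n+2) ≤ (20*(n+2))^(n+2) * ∑ x, |g x|^(n+2) := by
  have h := bellman n A N hN g 0 (avF g)
  have h0 := UU_zero_left n (avF g)
  have h1 : (2:ℝ)^A * UU n 0 (avF g) ≤ 0 := mul_nonpos_of_nonneg_of_nonpos (by positivity) h0
  rw [Finset.mul_sum]
  have h2 : ∑ x, |MN N g x|^(n+2) ≤ ∑ x, (UU n (0 + MN N g x) (avF g + (g x - avF g - MN N g x))
      + (20*(n+2))^(n+2) * |g x|^(n+2)) := by
    refine Finset.sum_le_sum fun x _ => ?_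
    have := UU_major n (MN N g x) (g x - MN N g x)
    rw [show MN N g x + (g x - MN N g x) = g x by ring, mul_pow] at this
    rw [show avF g + (g x - avF g - MN N g x) = g x - MN N g x by ring, zero_add]
    exact this
  rw [Finset.sum_add_distrib] at h2
  linarith

def DF {A : ℕ} (N : ℕ) (x t : Fin A → Bool) : ℝ := ∑ k ∈ Finset.range N, WF k x * WF k t

theorem SN_bound (n A N : ℕ) (hN : N < 2^A) (g : (Fin A → Bool) → ℝ) :
    ∑ x, |((2:ℝ)^A)⁻¹ * ∑ t, DF N x t * g t|^(n+2) ≤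
      (20*(n+2))^(n+2) * ∑ x, |g x|^(n+2) := by
  have h := MN_bound n A N hN (fun t => WF N t * g t)
  simp only [abs_mul, WF_abs, one_mul] at h
  have e : ∀ x, |((2:ℝ)^A)⁻¹ * ∑ t, DF N x t * g t| = |MN N (fun t => WF N t * g t) x| := by
    intro x
    have : MN N (fun t => WF N t * g t) x = WF N x * (((2:ℝ)^A)⁻¹ * ∑ t, DF N x t * g t) := by
      unfold MN
      rw [Finset.mul_sum, Finset.mul_sum, Finset.mul_sum]
      refine Finset.sum_congr rfl fun t _ => ?_
      have : kerF N x t = DF N x t * (WF N x * WF N t) := by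
        unfold kerF DF; rw [Finset.sum_mul]
      rw [this]
      linear_combination (((2:ℝ)^A)⁻¹ * DF N x t * WF N x * g t) * WF_mul_self N t
    rw [this, abs_mul (WF N x), WF_abs, one_mul]
  simp only [e]
  exact h

/-! ### Fejér kernels -/

def xorF {A : ℕ} (x t : Fin A → Bool) : Fin A → Bool := fun j => xor (x j) (t j)

theorem WF_xorF {A : ℕ} (k : ℕ) (x t : Fin A → Bool) : WF k (xorF x t) = WF k x * WF k t := by
  unfold WF
  rw [← Finset.prod_mul_distrib]
  refine Finset.prod_congr rfl fun j _ => ?_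
  split_ifs
  · simp only [xorF]; cases x j <;> cases t j <;> simp [sg]
  · ring

theorem sum_xorF {A : ℕ} (x : Fin A → Bool) (F : (Fin A → Bool) → ℝ) :
    ∑ t, F (xorF x t) = ∑ t, F t := by
  have hinv : Function.Involutive (xorF x) := by
    intro t; funext j; simp [xorF]
  exact Fintype.sum_equiv hinv.toPerm _ _ (fun _ => rfl)

theorem xorF_comm {A : ℕ} (x t : Fin A → Bool) : xorF x t = xorF t x := by
  funext j; simp [xorF, Bool.xor_comm]

theorem WF_xor {A : ℕ} (k l : ℕ) (x : Fin A → Bool) : WF (k ^^^ l) x = WF k x * WF l x := by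
  unfold WF
  rw [← Finset.prod_mul_distrib]
  refine Finset.prod_congr rfl fun j _ => ?_
  rw [Nat.testBit_xor]
  cases k.testBit j <;> cases l.testBit j <;> simp [sg_mul_self]

theorem two_pow_add_xor (B k : ℕ) (hk : k < 2^B) : 2^B + k = 2^B ^^^ k := by
  apply Nat.eq_of_testBit_eq
  intro j
  rw [Nat.testBit_xor, Nat.testBit_two_pow]
  rcases lt_trichotomy j B with h | h | h
  · rw [Nat.testBit_two_pow_add_gt h]; simp [h.ne']
  · subst h; rw [Nat.testBit_two_pow_add_eq]; simp [Nat.testBit_lt_two_pow hk]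
  · have h1 : 2^B + k < 2^j := by
      calc 2^B + k < 2^B + 2^B := by omega
        _ = 2^(B+1) := by ring
        _ ≤ 2^j := Nat.pow_le_pow_right (by norm_num) h
    have h2 : k < 2^j := by omega
    rw [Nat.testBit_lt_two_pow h1, Nat.testBit_lt_two_pow h2]; simp [h.ne]

theorem sum_WF (A : ℕ) : ∀ k < 2^A, ∑ x : Fin A → Bool, WF k x = if k = 0 then 2^A else 0 := by
  induction A with
  | zero => intro k hk; have : k = 0 := by simpa using hk
            subst this; simp [WF_zero]
  | succ A ih =>
    intro k hk
    rw [sum_cons, Fintype.sum_bool]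
    rw [pow_succ] at hk
    obtain ⟨M, rfl | rfl⟩ := Nat.even_or_odd' k
    · simp only [WF_even]
      rw [ih M (by omega)]
      rcases eq_or_ne M 0 with h | h <;> simp [h, pow_succ]; ring
    · simp only [WF_odd]
      simp [sg]

def Dk {A : ℕ} (i : ℕ) (z : Fin A → Bool) : ℝ := ∑ k ∈ Finset.range i, WF k z
def Ph {A : ℕ} (n : ℕ) (z : Fin A → Bool) : ℝ := ∑ i ∈ Finset.range n, Dk (i+1) z

theorem DF_eq {A : ℕ} (N : ℕ) (x t : Fin A → Bool) : DF N x t = Dk N (xorF x t) := by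
  simp [DF, Dk, WF_xorF]

theorem Dk_add {A : ℕ} (B i : ℕ) (hi : i ≤ 2^B) (z : Fin A → Bool) :
    Dk (2^B + i) z = Dk (2^B) z + WF (2^B) z * Dk i z := by
  unfold Dk
  rw [Finset.sum_range_add, Finset.mul_sum]
  congr 1
  refine Finset.sum_congr rfl fun k hk => ?_
  rw [two_pow_add_xor B k (by have := Finset.mem_range.1 hk; omega), WF_xor]

theorem Ph_add {A : ℕ} (B m : ℕ) (hm : m ≤ 2^B) (z : Fin A → Bool) :
    Ph (2^B + m) z = Ph (2^B) z + m * Dk (2^B) z + WF (2^B) z * Ph m z := by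
  unfold Ph
  rw [Finset.sum_range_add, Finset.mul_sum, add_assoc]
  congr 1
  have : (m:ℝ) * Dk (2^B) z = ∑ i ∈ Finset.range m, Dk (2^B) z := by simp
  rw [this, ← Finset.sum_add_distrib]
  refine Finset.sum_congr rfl fun i hi => ?_
  rw [add_assoc, Dk_add B _ (by have := Finset.mem_range.1 hi; omega)]

theorem one_add_WF_nonneg {A : ℕ} (k : ℕ) (z : Fin A → Bool) : 0 ≤ 1 + WF k z := by
  have := neg_abs_le (WF k z); rw [WF_abs] at this; linarith

theorem Dk_two_pow_nonneg {A : ℕ} (B : ℕ) (z : Fin A → Bool) : 0 ≤ Dk (2^B) z := by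
  induction B with
  | zero => simp [Dk, WF_zero]
  | succ B ih =>
    rw [pow_succ, mul_two, Dk_add B _ le_rfl]
    have := mul_nonneg (one_add_WF_nonneg (2^B) z) ih
    linarith

theorem Ph_two_pow_nonneg {A : ℕ} (B : ℕ) (z : Fin A → Bool) : 0 ≤ Ph (2^B) z := by
  induction B with
  | zero => simp [Ph, Dk, WF_zero]
  | succ B ih =>
    rw [pow_succ, mul_two, Ph_add B _ le_rfl]
    have h1 := mul_nonneg (one_add_WF_nonneg (2^B) z) ih
    have h2 := Dk_two_pow_nonneg B z
    have h3 : 0 ≤ ((2^B : ℕ):ℝ) * Dk (2^B) z := mul_nonneg (by positivity) h2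
    linarith

theorem sum_Dk (A i : ℕ) (h0 : 0 < i) (hi : i ≤ 2^A) : ∑ z : Fin A → Bool, Dk i z = 2^A := by
  unfold Dk
  rw [Finset.sum_comm, Finset.sum_eq_single_of_mem 0 (Finset.mem_range.2 h0)]
  · rw [sum_WF A 0 (by positivity)]; simp
  · intro k hk hk0
    rw [sum_WF A k (by have := Finset.mem_range.1 hk; omega)]; simp [hk0]

theorem sum_Ph (A n : ℕ) (hn : n ≤ 2^A) : ∑ z : Fin A → Bool, Ph n z = n * 2^A := by
  unfold Ph
  rw [Finset.sum_comm, Finset.sum_congr rfl (g := fun _ => (2:ℝ)^A)]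
  · simp
  · intro i hi
    exact sum_Dk A _ (by omega) (by have := Finset.mem_range.1 hi; omega)

theorem sum_abs_Ph (A : ℕ) : ∀ n ≤ 2^A, ∑ z : Fin A → Bool, |Ph n z| ≤ 2 * n * 2^A := by
  intro n
  induction n using Nat.strong_induction_on with
  | _ n ih =>
    intro hn
    rcases Nat.eq_zero_or_pos n with h | h
    · subst h; simp [Ph]
    · obtain ⟨B, h1, h2⟩ : ∃ B, 2^B ≤ n ∧ n < 2^(B+1) :=
        ⟨Nat.log 2 n, Nat.pow_log_le_self 2 h.ne', Nat.lt_pow_succ_log_self (by norm_num) n⟩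
      obtain ⟨m, rfl⟩ := Nat.exists_eq_add_of_le h1
      have hB0 : 0 < 2^B := by positivity
      rw [pow_succ] at h2
      have hm : m < 2^B := by omega
      have h3 := ih m (by omega) (by omega)
      have h4 : ∑ z : Fin A → Bool, |Ph (2^B+m) z| ≤
          ∑ z : Fin A → Bool, (Ph (2^B) z + m * Dk (2^B) z + |Ph m z|) := by
        refine Finset.sum_le_sum fun z _ => ?_
        rw [Ph_add B m hm.le]
        have a1 := Ph_two_pow_nonneg B z
        have a2 := Dk_two_pow_nonneg B z
        calc _ ≤ |Ph (2^B) z + m * Dk (2^B) z| + |WF (2^B) z * Ph m z| := abs_add_le _ _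
          _ = _ := by
            rw [abs_mul, WF_abs, one_mul, abs_of_nonneg]
            positivity
      rw [Finset.sum_add_distrib, Finset.sum_add_distrib, ← Finset.mul_sum, sum_Ph A _ (by omega),
        sum_Dk A _ hB0 (by omega)] at h4
      have h5 : (m:ℝ) ≤ ((2^B:ℕ):ℝ) := by exact_mod_cast hm.le
      have h6 : (0:ℝ) ≤ 2^A := by positivity
      push_cast at *
      nlinarith

theorem logSum_eq (n : ℕ) : logSum n = ∑ i ∈ Finset.Ico 1 n, (1:ℝ)/i := by
  unfold logSum
  rcases n with _ | n
  · simp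
  · congr 1

theorem logSum_succ (m : ℕ) (hm : 1 ≤ m) : logSum (m+1) = logSum m + 1/m := by
  rw [logSum_eq, logSum_eq, Finset.sum_Ico_succ_top hm]

theorem logSum_pos (n : ℕ) (hn : 2 ≤ n) : 0 < logSum n := by
  rw [logSum_eq]
  apply Finset.sum_pos
  · intro i hi
    have := (Finset.mem_Ico.1 hi).1
    positivity
  · exact ⟨1, Finset.mem_Ico.2 ⟨le_rfl, hn⟩⟩

theorem riesz_aux (A : ℕ) (m : ℕ) : 1 ≤ m → m ≤ 2^A →
    ∑ z : Fin A → Bool, |(∑ i ∈ Finset.Ico 1 (m+1), Dk i z / i) - Ph m z / m| ≤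
      2 * (logSum (m+1) - 1) * 2^A := by
  induction m with
  | zero => intro h; omega
  | succ m ih =>
    intro _ hA
    rcases Nat.eq_zero_or_pos m with h0 | hm
    · subst h0; simp [Ph, logSum]
    have h1 := ih hm (by omega)
    have h2 := sum_abs_Ph A m (by omega)
    have hm0 : (0:ℝ) < m := by exact_mod_cast hm
    rw [logSum_succ (m+1) (by omega)]
    have h3 : ∑ z : Fin A → Bool, |(∑ i ∈ Finset.Ico 1 (m+1+1), Dk i z / i)
        - Ph (m+1) z / (m+1:ℕ)| ≤
        ∑ z : Fin A → Bool, (|(∑ i ∈ Finset.Ico 1 (m+1), Dk i z / i) - Ph m z / m|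
          + (1/m - 1/(m+1)) * |Ph m z|) := by
      refine Finset.sum_le_sum fun z _ => ?_
      rw [Finset.sum_Ico_succ_top (by omega)]
      have e : Ph (m+1) z = Ph m z + Dk (m+1) z := by unfold Ph; rw [Finset.sum_range_succ]
      have hc : (0:ℝ) ≤ 1/m - 1/(m+1) := by
        rw [sub_nonneg]; apply one_div_le_one_div_of_le hm0; linarith
      calc _ = |((∑ i ∈ Finset.Ico 1 (m+1), Dk i z / i) - Ph m z / m)
            + (1/m - 1/(m+1)) * Ph m z| := by
            rw [e]; push_cast; congr 1; field_simp; ring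
        _ ≤ _ := by
            refine (abs_add_le _ _).trans ?_
            rw [abs_mul, abs_of_nonneg hc]
    rw [Finset.sum_add_distrib, ← Finset.mul_sum] at h3
    have hc : (0:ℝ) ≤ 1/m - 1/(m+1) := by
      rw [sub_nonneg]; apply one_div_le_one_div_of_le hm0; linarith
    have h4 := mul_le_mul_of_nonneg_left h2 hc
    have e : (1/(m:ℝ) - 1/(m+1)) * (2 * m * 2^A) = 2 * (1/(m+1)) * 2^A := by field_simp; ring
    rw [e] at h4
    push_cast at *
    linarith

theorem riesz_bound (A n : ℕ) (hn : 2 ≤ n) (hA : n ≤ 2^A) :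
    ∑ z : Fin A → Bool, |∑ i ∈ Finset.Ico 1 n, Dk i z / i| ≤ 2 * logSum n * 2^A := by
  obtain ⟨m, rfl⟩ : ∃ m, n = m + 1 := ⟨n-1, by omega⟩
  have h1 := riesz_aux A m (by omega) (by omega)
  have h2 := sum_abs_Ph A m (by omega)
  have hm0 : (0:ℝ) < m := by exact_mod_cast (show 0 < m by omega)
  have h3 : ∑ z : Fin A → Bool, |∑ i ∈ Finset.Ico 1 (m+1), Dk i z / i| ≤
      ∑ z : Fin A → Bool, (|(∑ i ∈ Finset.Ico 1 (m+1), Dk i z / i) - Ph m z / m|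
          + (1/m) * |Ph m z|) := by
    refine Finset.sum_le_sum fun z _ => ?_
    calc _ = |((∑ i ∈ Finset.Ico 1 (m+1), Dk i z / i) - Ph m z / m) + (1/m) * Ph m z| := by
          congr 1; ring
      _ ≤ _ := by
        refine (abs_add_le _ _).trans ?_
        rw [abs_mul (1/(m:ℝ)), abs_of_nonneg (by positivity : 0 ≤ 1/(m:ℝ))]
  rw [Finset.sum_add_distrib, ← Finset.mul_sum] at h3
  have h4 := mul_le_mul_of_nonneg_left h2 (by positivity : 0 ≤ 1/(m:ℝ))
  have e : (1/(m:ℝ)) * (2 * m * 2^A) = 2 * 2^A := by field_simp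
  rw [e] at h4
  linarith

theorem jensen_pow {ι : Type*} (s : Finset ι) (w a : ι → ℝ) (hw : ∀ i ∈ s, 0 ≤ w i)
    (ha : ∀ i ∈ s, 0 ≤ a i) (p : ℕ) :
    (∑ i ∈ s, w i * a i)^(p+1) ≤ (∑ i ∈ s, w i)^p * ∑ i ∈ s, w i * a i^(p+1) := by
  rcases eq_or_lt_of_le (Finset.sum_nonneg hw) with h | h
  · have hz : ∀ i ∈ s, w i = 0 := (Finset.sum_eq_zero_iff_of_nonneg hw).1 h.symm
    rw [Finset.sum_eq_zero (fun i hi => by rw [hz i hi, zero_mul]),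
      Finset.sum_eq_zero (f := fun i => w i * a i^(p+1)) (fun i hi => by rw [hz i hi, zero_mul])]
    simp
  · set Z := ∑ i ∈ s, w i with hZ
    have := Real.pow_arith_mean_le_arith_mean_pow s (fun i => w i / Z) a
      (fun i hi => div_nonneg (hw i hi) h.le) (by rw [← Finset.sum_div, ← hZ, div_self h.ne']) ha
      (p+1)
    have e1 : ∀ c : ι → ℝ, ∑ i ∈ s, w i / Z * c i = (∑ i ∈ s, w i * c i) / Z := by
      intro c; rw [Finset.sum_div]; exact Finset.sum_congr rfl fun i _ => by ring
    rw [e1, e1, div_pow, div_le_div_iff₀ (by positivity) h] at this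
    have h2 : (∑ i ∈ s, w i * a i)^(p+1) * Z ≤ (Z^p * ∑ i ∈ s, w i * a i^(p+1)) * Z := by
      calc _ ≤ _ := this
        _ = _ := by ring
    exact le_of_mul_le_mul_right h2 h

theorem jensen_abs {ι : Type*} (s : Finset ι) (w a : ι → ℝ) (p : ℕ) :
    |∑ i ∈ s, w i * a i|^(p+1) ≤ (∑ i ∈ s, |w i|)^p * ∑ i ∈ s, |w i| * |a i|^(p+1) := by
  refine le_trans ?_ (jensen_pow s (fun i => |w i|) (fun i => |a i|) (fun i _ => abs_nonneg _)
    (fun i _ => abs_nonneg _) p)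
  gcongr
  refine (Finset.abs_sum_le_sum_abs _ _).trans (le_of_eq ?_)
  exact Finset.sum_congr rfl fun i _ => abs_mul _ _

/-- index of the partial sum -/
def KK (β : Prop) [Decidable β] (n i : ℕ) : ℕ := if β then n - i else i

def kap {A : ℕ} (β : Prop) [Decidable β] (n : ℕ) (x t : Fin A → Bool) : ℝ :=
  ∑ i ∈ Finset.Ico 1 n, (1 / (i * logSum n)) * DF (KK β n i) x t

theorem sum_weights (n : ℕ) (hn : 2 ≤ n) : ∑ i ∈ Finset.Ico 1 n, 1 / ((i:ℝ) * logSum n) = 1 := by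
  have h := logSum_pos n hn
  have : ∑ i ∈ Finset.Ico 1 n, 1 / ((i:ℝ) * logSum n) = (∑ i ∈ Finset.Ico 1 n, (1:ℝ)/i) / logSum n := by
    rw [Finset.sum_div]; exact Finset.sum_congr rfl fun i _ => by rw [div_div]
  rw [this, ← logSum_eq, div_self h.ne']

theorem kap_bound_true (p A n : ℕ) (β : Prop) [Decidable β] (hβ : β) (hn : 2 ≤ n) (hA : n ≤ 2^A)
    (g : (Fin A → Bool) → ℝ) :
    ∑ x, |((2:ℝ)^A)⁻¹ * ∑ t, kap β n x t * g t|^(p+2) ≤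
      (20*(p+2))^(p+2) * ∑ x, |g x|^(p+2) := by
  have hl := logSum_pos n hn
  have e : ∀ x : Fin A → Bool, ((2:ℝ)^A)⁻¹ * ∑ t, kap β n x t * g t =
      ∑ i ∈ Finset.Ico 1 n, (1 / (i * logSum n)) *
        (((2:ℝ)^A)⁻¹ * ∑ t, DF (n - i) x t * g t) := by
    intro x
    simp only [kap, KK, if_pos hβ, Finset.mul_sum, Finset.sum_mul]
    rw [Finset.sum_comm]
    refine Finset.sum_congr rfl fun i _ => Finset.sum_congr rfl fun t _ => ?_
    ring
  have hw : ∀ i ∈ Finset.Ico 1 n, |1 / ((i:ℝ) * logSum n)| = 1 / ((i:ℝ) * logSum n) :=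
    fun i _ => abs_of_nonneg (by positivity)
  have h1 : ∀ x : Fin A → Bool, |((2:ℝ)^A)⁻¹ * ∑ t, kap β n x t * g t|^(p+2) ≤
      ∑ i ∈ Finset.Ico 1 n, (1 / (i * logSum n)) *
        |((2:ℝ)^A)⁻¹ * ∑ t, DF (n - i) x t * g t|^(p+2) := by
    intro x
    rw [e]
    refine (jensen_abs _ _ _ (p+1)).trans (le_of_eq ?_)
    rw [Finset.sum_congr rfl hw, sum_weights n hn, one_pow, one_mul]
    exact Finset.sum_congr rfl fun i hi => by rw [hw i hi]
  refine (Finset.sum_le_sum fun x _ => h1 x).trans ?_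
  rw [Finset.sum_comm]
  calc _ ≤ ∑ i ∈ Finset.Ico 1 n, (1 / (i * logSum n)) *
        ((20*(p+2))^(p+2) * ∑ x, |g x|^(p+2)) := by
        refine Finset.sum_le_sum fun i hi => ?_
        rw [← Finset.mul_sum]
        have := Finset.mem_Ico.1 hi
        exact mul_le_mul_of_nonneg_left (SN_bound p A (n-i) (by omega) g) (by positivity)
    _ = _ := by rw [← Finset.sum_mul, sum_weights n hn, one_mul]

theorem kap_bound_false (p A n : ℕ) (β : Prop) [Decidable β] (hβ : ¬ β) (hn : 2 ≤ n)
    (hA : n ≤ 2^A) (g : (Fin A → Bool) → ℝ) :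
    ∑ x, |((2:ℝ)^A)⁻¹ * ∑ t, kap β n x t * g t|^(p+2) ≤ 2^(p+2) * ∑ x, |g x|^(p+2) := by
  have hl := logSum_pos n hn
  set k : (Fin A → Bool) → ℝ := fun z => ((2:ℝ)^A)⁻¹ * ((∑ i ∈ Finset.Ico 1 n, Dk i z / i) / logSum n)
    with hk
  have hks : ∑ z, |k z| ≤ 2 := by
    have := riesz_bound A n hn hA
    simp only [hk, abs_mul, abs_div]
    rw [← Finset.mul_sum, ← Finset.sum_div, abs_of_pos hl,
      abs_of_pos (by positivity : (0:ℝ) < ((2:ℝ)^A)⁻¹), inv_mul_le_iff₀ (by positivity),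
      div_le_iff₀ hl]
    linarith
  have e : ∀ x : Fin A → Bool, ((2:ℝ)^A)⁻¹ * ∑ t, kap β n x t * g t =
      ∑ t, k (xorF x t) * g t := by
    intro x
    rw [Finset.mul_sum]
    refine Finset.sum_congr rfl fun t _ => ?_
    simp only [kap, KK, if_neg hβ, hk, DF_eq]
    have : ∑ i ∈ Finset.Ico 1 n, (1 / (i * logSum n)) * Dk i (xorF x t) =
        (∑ i ∈ Finset.Ico 1 n, Dk i (xorF x t) / i) / logSum n := by
      rw [Finset.sum_div]
      exact Finset.sum_congr rfl fun i _ => by rw [div_div]; ring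
    rw [this]; ring
  have h1 : ∀ x : Fin A → Bool, |((2:ℝ)^A)⁻¹ * ∑ t, kap β n x t * g t|^(p+2) ≤
      2^(p+1) * ∑ t, |k (xorF x t)| * |g t|^(p+2) := by
    intro x
    rw [e]
    refine (jensen_abs _ _ _ (p+1)).trans ?_
    gcongr
    rw [sum_xorF x (fun z => |k z|)]
    exact hks
  refine (Finset.sum_le_sum fun x _ => h1 x).trans ?_
  rw [← Finset.mul_sum, Finset.sum_comm]
  have h2 : ∀ t : Fin A → Bool, ∑ x, |k (xorF x t)| * |g t|^(p+2) ≤ 2 * |g t|^(p+2) := by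
    intro t
    rw [← Finset.sum_mul]
    gcongr
    simp only [xorF_comm _ t]
    rw [sum_xorF t (fun z => |k z|)]
    exact hks
  calc _ ≤ (2:ℝ)^(p+1) * ∑ t, 2 * |g t|^(p+2) := by
        gcongr with t; exact h2 t
    _ = _ := by rw [← Finset.mul_sum]; ring

/-- Tensor products of operators bounded on `ℓ^q`. -/
theorem tensor_bound {Q : Type*} [Fintype Q] (q : ℕ) (d : ℕ) :
    ∀ (K : Fin d → Q → Q → ℝ) (C : Fin d → ℝ) (_ : ∀ j, 0 ≤ C j)
    (_ : ∀ j (g : Q → ℝ), ∑ x, |∑ t, K j x t * g t|^q ≤ (C j)^q * ∑ t, |g t|^q)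
    (G : (Fin d → Q) → ℝ),
    ∑ x : Fin d → Q, |∑ t : Fin d → Q, (∏ j, K j (x j) (t j)) * G t|^q ≤
      (∏ j, C j)^q * ∑ t, |G t|^q := by
  induction d with
  | zero => intro K C hC hK G; simp
  | succ d ih =>
    intro K C hC hK G
    have ih' := ih (fun j => K j.succ) (fun j => C j.succ) (fun j => hC _) (fun j => hK _)
    set H : Q → (Fin d → Q) → ℝ := fun t0 x' =>
      ∑ t' : Fin d → Q, (∏ j : Fin d, K j.succ (x' j) (t' j)) * G (Fin.cons t0 t') with hH
    have e : ∀ (x0 : Q) (x' : Fin d → Q),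
        ∑ t : Fin (d+1) → Q, (∏ j, K j ((Fin.cons x0 x' : Fin (d+1) → Q) j) (t j)) * G t =
        ∑ t0, K 0 x0 t0 * H t0 x' := by
      intro x0 x'
      rw [sum_cons]
      refine Finset.sum_congr rfl fun t0 _ => ?_
      rw [hH, Finset.mul_sum]
      refine Finset.sum_congr rfl fun t' _ => ?_
      rw [Fin.prod_univ_succ]
      simp only [Fin.cons_zero, Fin.cons_succ]
      ring
    rw [sum_cons, sum_cons]
    simp only [e]
    rw [Finset.sum_comm]
    calc _ ≤ ∑ x' : Fin d → Q, (C 0)^q * ∑ t0, |H t0 x'|^q :=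
          Finset.sum_le_sum fun x' _ => hK 0 (fun t0 => H t0 x')
      _ = (C 0)^q * ∑ t0, ∑ x' : Fin d → Q, |H t0 x'|^q := by
          rw [← Finset.mul_sum, Finset.sum_comm]
      _ ≤ (C 0)^q * ∑ t0, ((∏ j : Fin d, C j.succ)^q * ∑ t', |G (Fin.cons t0 t')|^q) := by
          have := hC 0
          gcongr with t0
          exact ih' (fun t' => G (Fin.cons t0 t'))
      _ = _ := by
          rw [← Finset.mul_sum, Fin.prod_univ_succ, mul_pow]; ring

theorem mixed_finite_bound (p A d : ℕ) (B : Finset (Fin d)) (n : Fin d → ℕ) (hn : ∀ j, 2 ≤ n j)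
    (hA : ∀ j, n j ≤ 2^A) (G : (Fin d → Fin A → Bool) → ℝ) :
    ∑ x : Fin d → Fin A → Bool,
      |((2:ℝ)^(A*d))⁻¹ * ∑ t : Fin d → Fin A → Bool, (∏ j, kap (j ∈ B) (n j) (x j) (t j)) * G t|^(p+2)
      ≤ (2^d * 20^B.card * ((p:ℝ)+2)^B.card)^(p+2) * ∑ t, |G t|^(p+2) := by
  have h := tensor_bound (Q := Fin A → Bool) (p+2) d
    (fun j x t => ((2:ℝ)^A)⁻¹ * kap (j ∈ B) (n j) x t)
    (fun j => if j ∈ B then 20*(p+2) else 2)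
    (by intro j; split_ifs <;> positivity)
    (by
      intro j g
      have e : ∀ x, ∑ t, ((2:ℝ)^A)⁻¹ * kap (j ∈ B) (n j) x t * g t =
          ((2:ℝ)^A)⁻¹ * ∑ t, kap (j ∈ B) (n j) x t * g t := by
        intro x; rw [Finset.mul_sum]; exact Finset.sum_congr rfl fun t _ => by ring
      simp only [e]
      split_ifs with hj
      · exact kap_bound_true p A (n j) _ hj (hn j) (hA j) g
      · exact kap_bound_false p A (n j) _ hj (hn j) (hA j) g) G
  have e : ∀ x : Fin d → Fin A → Bool,
      ∑ t : Fin d → Fin A → Bool, (∏ j, ((2:ℝ)^A)⁻¹ * kap (j ∈ B) (n j) (x j) (t j)) * G t =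
      ((2:ℝ)^(A*d))⁻¹ * ∑ t : Fin d → Fin A → Bool, (∏ j, kap (j ∈ B) (n j) (x j) (t j)) * G t := by
    intro x
    rw [Finset.mul_sum]
    refine Finset.sum_congr rfl fun t _ => ?_
    rw [Finset.prod_mul_distrib, Finset.prod_const, Finset.card_univ, Fintype.card_fin, inv_pow,
      ← pow_mul, mul_assoc]
  simp only [e] at h
  refine h.trans ?_
  have hs : 0 ≤ ∑ t, |G t|^(p+2) := Finset.sum_nonneg fun t _ => by positivity
  refine mul_le_mul_of_nonneg_right ?_ hs
  have hp0 : 0 ≤ ∏ j : Fin d, (if j ∈ B then 20*((p:ℝ)+2) else 2) :=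
    Finset.prod_nonneg fun j _ => by split_ifs <;> positivity
  refine pow_le_pow_left₀ hp0 ?_ _
  calc ∏ j : Fin d, (if j ∈ B then 20*((p:ℝ)+2) else 2)
      ≤ ∏ j : Fin d, 2 * (if j ∈ B then 20*((p:ℝ)+2) else 1) := by
        refine Finset.prod_le_prod (fun j _ => by split_ifs <;> positivity) fun j _ => ?_
        split_ifs
        · have : (0:ℝ) ≤ p := Nat.cast_nonneg p
          linarith
        · norm_num
    _ = _ := by
        rw [Finset.prod_mul_distrib, Finset.prod_const, Finset.card_univ, Fintype.card_fin,
          Finset.prod_ite_mem, Finset.univ_inter, Finset.prod_const, mul_pow]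
        ring

/-! ### Transfer to the unit cube -/

def dig (A : ℕ) (x : ℝ) : Fin A → Bool := fun j => decide (¬ Int.fract (2^(j:ℕ) * x) < 1/2)

theorem sg_dig (A : ℕ) (x : ℝ) (j : Fin A) : sg (dig A x j) = rademacher j x := by
  simp only [sg, dig, rademacher, r0]
  by_cases h : Int.fract (2^(j:ℕ) * x) < 1/2
  · rw [if_pos h]; simp only [h]; simp
  · rw [if_neg h]; simp only [h]; simp

theorem walsh_eq_WF (A k : ℕ) (hk : k < 2^A) (x : ℝ) : walsh k x = WF k (dig A x) := by
  unfold WF walsh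
  simp only [sg_dig]
  have h1 : ∏ j ∈ Finset.range (k+1), (if k.testBit j then rademacher j x else 1) =
      ∏ j ∈ Finset.range (k+1+A), (if k.testBit j then rademacher j x else 1) := by
    apply Finset.prod_subset
    · intro j hj; simp at hj ⊢; omega
    · intro j _ hj
      rw [Nat.testBit_lt_two_pow]; · simp
      simp at hj
      exact lt_of_lt_of_le Nat.lt_two_pow_self (Nat.pow_le_pow_right (by norm_num) (by omega))
  have h2 : ∏ j ∈ Finset.range A, (if k.testBit j then rademacher j x else 1) =
      ∏ j ∈ Finset.range (k+1+A), (if k.testBit j then rademacher j x else 1) := by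
    apply Finset.prod_subset
    · intro j hj; simp at hj ⊢; omega
    · intro j _ hj
      rw [Nat.testBit_lt_two_pow]; · simp
      simp at hj
      exact lt_of_lt_of_le hk (Nat.pow_le_pow_right (by norm_num) (by omega))
  rw [h1, ← h2]
  exact Finset.prod_range (fun j => if k.testBit j then rademacher j x else 1)

theorem measurable_dig (A : ℕ) : Measurable (dig A) := by
  rw [measurable_pi_iff]
  intro j
  have : (fun x : ℝ => dig A x j) = fun x => if Int.fract (2^(j:ℕ) * x) < 1/2 then false else true := by
    funext x
    by_cases h : Int.fract (2^(j:ℕ) * x) < 1/2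
    · rw [if_pos h]; simp only [dig, h]; simp
    · rw [if_neg h]; simp only [dig, h]; simp
  rw [this]
  refine Measurable.ite ?_ measurable_const measurable_const
  exact measurableSet_lt (measurable_fract.comp (measurable_const.mul measurable_id)) measurable_const

theorem dig_succ (A : ℕ) (x : ℝ) (j : Fin A) : dig (A+1) x j.succ = dig A (2*x) j := by
  simp only [dig, Fin.val_succ]
  have e : (2:ℝ)^((j:ℕ)+1) * x = 2^(j:ℕ) * (2 * x) := by ring
  simp only [e]

theorem dig_sub_one (A : ℕ) (x : ℝ) : dig A (x - 1) = dig A x := by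
  funext j
  simp only [dig]
  have : (2:ℝ)^(j:ℕ) * (x - 1) = 2^(j:ℕ) * x - ((2^(j:ℕ) : ℕ) : ℝ) := by push_cast; ring
  rw [this, Int.fract_sub_natCast]

theorem vol_dig (A : ℕ) (c : Fin A → Bool) :
    volume (Set.Ico (0:ℝ) 1 ∩ {x | dig A x = c}) = ((2:ENNReal)^A)⁻¹ := by
  induction A with
  | zero =>
    have : {x : ℝ | dig 0 x = c} = Set.univ := by
      ext x; simp; exact Subsingleton.elim _ _
    rw [this]; simp
  | succ A ih =>
    obtain ⟨e, c', rfl⟩ : ∃ e c', c = Fin.cons e c' := ⟨c 0, Fin.tail c, (Fin.cons_self_tail c).symm⟩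
    have hS : ∀ x : ℝ, dig (A+1) x = Fin.cons e c' ↔ dig (A+1) x 0 = e ∧ dig A (2*x) = c' := by
      intro x
      rw [funext_iff, Fin.forall_fin_succ]
      simp only [Fin.cons_zero, Fin.cons_succ, dig_succ, funext_iff]
    have hfr : ∀ x : ℝ, x ∈ Set.Ico (0:ℝ) 1 → (dig (A+1) x 0 = decide (¬ x < 1/2)) := by
      intro x hx
      simp only [dig, Fin.val_zero, pow_zero, one_mul]
      rw [Int.fract_eq_self.2 ⟨hx.1, hx.2⟩]
    have hhalf : (((2:ENNReal)^(A+1))⁻¹) = ENNReal.ofReal |(2:ℝ)⁻¹| * ((2:ENNReal)^A)⁻¹ := by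
      rw [pow_succ, ENNReal.mul_inv (by simp) (by simp), mul_comm]
      congr 1
      rw [abs_of_pos (by norm_num), ENNReal.ofReal_inv_of_pos (by norm_num)]
      simp
    cases e with
    | false =>
      have : Set.Ico (0:ℝ) 1 ∩ {x | dig (A+1) x = Fin.cons false c'} =
          (fun x => 2 * x) ⁻¹' (Set.Ico (0:ℝ) 1 ∩ {x | dig A x = c'}) := by
        ext x
        simp only [Set.mem_inter_iff, Set.mem_ofPred_eq, Set.mem_preimage, hS]
        constructor
        · rintro ⟨hx, h0, h1⟩
          rw [hfr x hx] at h0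
          simp at h0
          exact ⟨⟨by linarith [hx.1], by linarith⟩, h1⟩
        · rintro ⟨hx, h1⟩
          have hx' : x ∈ Set.Ico (0:ℝ) 1 := ⟨by linarith [hx.1], by linarith [hx.1, hx.2]⟩
          refine ⟨hx', ?_, h1⟩
          rw [hfr x hx']
          simp; linarith [hx.2]
      rw [this, Real.volume_preimage_mul_left (by norm_num), ih, hhalf]
    | true =>
      have : Set.Ico (0:ℝ) 1 ∩ {x | dig (A+1) x = Fin.cons true c'} =
          (fun x => 2 * x) ⁻¹' ((fun x => x - 1) ⁻¹' (Set.Ico (0:ℝ) 1 ∩ {x | dig A x = c'})) := by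
        ext x
        simp only [Set.mem_inter_iff, Set.mem_ofPred_eq, Set.mem_preimage, hS, dig_sub_one]
        constructor
        · rintro ⟨hx, h0, h1⟩
          rw [hfr x hx] at h0
          simp at h0
          exact ⟨⟨by linarith [hx.1], by linarith [hx.2]⟩, h1⟩
        · rintro ⟨hx, h1⟩
          have hx' : x ∈ Set.Ico (0:ℝ) 1 := ⟨by linarith [hx.1], by linarith [hx.1, hx.2]⟩
          refine ⟨hx', ?_, h1⟩
          rw [hfr x hx']
          simp; linarith [hx.1]
      have hsub : ∀ S : Set ℝ, volume ((fun x : ℝ => x - 1) ⁻¹' S) = volume S := by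
        intro S
        simp only [sub_eq_add_neg]
        exact measure_preimage_add_right volume (-1) S
      rw [this, Real.volume_preimage_mul_left (by norm_num), hsub, ih, hhalf]

def cellD {d : ℕ} (A : ℕ) (x : Fin d → ℝ) : Fin d → Fin A → Bool := fun j => dig A (x j)

theorem measurable_cellD {d : ℕ} (A : ℕ) : Measurable (cellD (d := d) A) := by
  rw [measurable_pi_iff]
  intro j
  exact (measurable_dig A).comp (measurable_pi_apply j)

theorem measurableSet_unitCube (d : ℕ) : MeasurableSet (unitCube d) :=
  MeasurableSet.univ_pi fun _ => measurableSet_Ico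

theorem cube_cell {d : ℕ} (A : ℕ) (c : Fin d → Fin A → Bool) :
    cubeMeasure d (cellD A ⁻¹' {c}) = ((2:ENNReal)^(A*d))⁻¹ := by
  unfold cubeMeasure
  rw [Measure.restrict_apply (measurable_cellD A (measurableSet_singleton c))]
  have : cellD A ⁻¹' {c} ∩ unitCube d =
      Set.univ.pi fun j => (Set.Ico (0:ℝ) 1 ∩ {x | dig A x = c j}) := by
    ext x
    simp only [unitCube, Set.mem_inter_iff, Set.mem_preimage, Set.mem_singleton_iff,
      Set.mem_univ_pi, Set.mem_ofPred_eq]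
    constructor
    · rintro ⟨h1, h2⟩ j; exact ⟨h2 j, congrFun h1 j⟩
    · intro h; exact ⟨funext fun j => (h j).2, fun j => (h j).1⟩
  rw [this, volume_pi_pi]
  simp only [vol_dig]
  rw [Finset.prod_const, Finset.card_univ, Fintype.card_fin, pow_mul, ENNReal.inv_pow, ENNReal.inv_pow, ENNReal.inv_pow]

instance cube_prob (d : ℕ) : IsProbabilityMeasure (cubeMeasure d) := by
  constructor
  unfold cubeMeasure unitCube
  rw [Measure.restrict_apply_univ, volume_pi_pi]
  simp

theorem integral_cell {d : ℕ} (A : ℕ) (Φ : (Fin d → Fin A → Bool) → ℝ) :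
    ∫ x, Φ (cellD A x) ∂(cubeMeasure d) = ((2:ℝ)^(A*d))⁻¹ * ∑ c, Φ c := by
  rw [← integral_map (φ := cellD A) (measurable_cellD A).aemeasurable
    (measurable_of_finite Φ).aestronglyMeasurable]
  have : IsProbabilityMeasure (Measure.map (cellD A) (cubeMeasure d)) :=
    Measure.isProbabilityMeasure_map (measurable_cellD A).aemeasurable
  rw [integral_fintype (Integrable.of_finite), Finset.mul_sum]
  refine Finset.sum_congr rfl fun c _ => ?_
  rw [measureReal_def, Measure.map_apply (measurable_cellD A) (measurableSet_singleton c), cube_cell]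
  simp

theorem measurable_cell_fun {d : ℕ} (A : ℕ) (Φ : (Fin d → Fin A → Bool) → ℝ) :
    Measurable (fun x : Fin d → ℝ => Φ (cellD A x)) :=
  (measurable_of_finite Φ).comp (measurable_cellD A)

theorem bounded_cell_fun {d : ℕ} (A : ℕ) (Φ : (Fin d → Fin A → Bool) → ℝ) :
    ∃ M, ∀ x : Fin d → ℝ, |Φ (cellD A x)| ≤ M :=
  ⟨∑ c, |Φ c|, fun x => Finset.single_le_sum (f := fun c => |Φ c|) (fun c _ => abs_nonneg _)
    (Finset.mem_univ _)⟩

theorem integrable_mul_cell {d : ℕ} (A : ℕ) (Φ : (Fin d → Fin A → Bool) → ℝ)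
    {f : (Fin d → ℝ) → ℝ} (hf : Integrable f (cubeMeasure d)) :
    Integrable (fun x => f x * Φ (cellD A x)) (cubeMeasure d) := by
  obtain ⟨M, hM⟩ := bounded_cell_fun A Φ
  exact hf.mul_bdd (c := M) (measurable_cell_fun A Φ).aestronglyMeasurable
    (Eventually.of_forall fun x => by rw [Real.norm_eq_abs]; exact hM x)

theorem integrable_cell {d : ℕ} (A : ℕ) (Φ : (Fin d → Fin A → Bool) → ℝ) :
    Integrable (fun x => Φ (cellD A x)) (cubeMeasure d) := by
  have := integrable_mul_cell A Φ (integrable_const (μ := cubeMeasure d) (1:ℝ))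
  simpa using this

/-! ### Multiplier form -/

def lam (β : Prop) [Decidable β] (n k : ℕ) : ℝ :=
  ∑ i ∈ Finset.Ico 1 n, if k < KK β n i then 1 / ((i:ℝ) * logSum n) else 0

theorem rect_eq {d : ℕ} (f : (Fin d → ℝ) → ℝ) (N n : Fin d → ℕ) (h : ∀ j, N j ≤ n j)
    (x : Fin d → ℝ) :
    rectPartialSum f N x = ∑ k ∈ Fintype.piFinset (fun i => Finset.range (n i)),
      (∏ j, if k j < N j then (1:ℝ) else 0) * (walshCoef f k * ∏ i, walsh (k i) (x i)) := by
  unfold rectPartialSum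
  symm
  rw [← Finset.sum_subset (s₁ := Fintype.piFinset (fun i => Finset.range (N i)))]
  · refine Finset.sum_congr rfl fun k hk => ?_
    rw [Fintype.mem_piFinset] at hk
    rw [Finset.prod_eq_one, one_mul]
    intro j _
    rw [if_pos (Finset.mem_range.1 (hk j))]
  · intro k hk
    rw [Fintype.mem_piFinset] at hk ⊢
    intro j
    have := Finset.mem_range.1 (hk j)
    exact Finset.mem_range.2 (lt_of_lt_of_le this (h j))
  · intro k _ hk
    rw [Fintype.mem_piFinset] at hk
    push Not at hk
    obtain ⟨j, hj⟩ := hk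
    rw [Finset.prod_eq_zero (Finset.mem_univ j), zero_mul]
    rw [if_neg]
    simpa using hj

theorem mean_eq {d : ℕ} (B : Finset (Fin d)) (f : (Fin d → ℝ) → ℝ) (n : Fin d → ℕ)
    (x : Fin d → ℝ) :
    mixedLogMean B f n x = ∑ k ∈ Fintype.piFinset (fun i => Finset.range (n i)),
      (∏ j, lam (j ∈ B) (n j) (k j)) * walshCoef f k * ∏ i, walsh (k i) (x i) := by
  unfold mixedLogMean
  have h1 : ∀ i ∈ Fintype.piFinset (fun j => Finset.Ico 1 (n j)),
      rectPartialSum f (fun j => if j ∈ B then n j - i j else i j) x / ∏ j, (i j : ℝ) =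
      ∑ k ∈ Fintype.piFinset (fun i => Finset.range (n i)),
        ((∏ j, if k j < KK (j ∈ B) (n j) (i j) then (1:ℝ) else 0) *
        (walshCoef f k * ∏ i, walsh (k i) (x i))) / ∏ j, (i j : ℝ) := by
    intro i hi
    rw [Fintype.mem_piFinset] at hi
    rw [rect_eq f _ n, Finset.sum_div]
    · rfl
    · intro j
      have := Finset.mem_Ico.1 (hi j)
      split_ifs <;> omega
  rw [Finset.sum_congr rfl h1, Finset.sum_comm, Finset.mul_sum]
  refine Finset.sum_congr rfl fun k _ => ?_
  have h2 : ∏ j, lam (j ∈ B) (n j) (k j) = ∑ i ∈ Fintype.piFinset (fun j => Finset.Ico 1 (n j)),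
      ∏ j, (if k j < KK (j ∈ B) (n j) (i j) then 1 / ((i j:ℝ) * logSum (n j)) else 0) := by
    unfold lam
    rw [Finset.prod_univ_sum]
  rw [h2, mul_assoc, Finset.sum_mul, Finset.mul_sum]
  refine Finset.sum_congr rfl fun i _ => ?_
  have h3 : ∏ j, (if k j < KK (j ∈ B) (n j) (i j) then 1 / ((i j:ℝ) * logSum (n j)) else 0) =
      (∏ j, if k j < KK (j ∈ B) (n j) (i j) then (1:ℝ) else 0) *
        ((∏ j, (i j : ℝ))⁻¹ * (∏ j, logSum (n j))⁻¹) := by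
    rw [← Finset.prod_inv_distrib, ← Finset.prod_inv_distrib, ← Finset.prod_mul_distrib,
      ← Finset.prod_mul_distrib]
    refine Finset.prod_congr rfl fun j _ => ?_
    split_ifs
    · rw [one_mul, one_div, mul_inv]
    · rw [zero_mul]
  rw [h3]
  ring

def WD {d A : ℕ} (k : Fin d → ℕ) (c : Fin d → Fin A → Bool) : ℝ := ∏ i, WF (k i) (c i)

theorem walsh_prod_eq {d : ℕ} (A : ℕ) (k : Fin d → ℕ) (hk : ∀ j, k j < 2^A) (x : Fin d → ℝ) :
    ∏ i, walsh (k i) (x i) = WD k (cellD A x) := by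
  unfold WD cellD
  exact Finset.prod_congr rfl fun i _ => walsh_eq_WF A (k i) (hk i) (x i)

theorem mem_box {d : ℕ} {A : ℕ} {n : Fin d → ℕ} (hA : ∀ j, n j ≤ 2^A) {k : Fin d → ℕ}
    (hk : k ∈ Fintype.piFinset (fun i => Finset.range (n i))) : ∀ j, k j < 2^A := by
  intro j
  rw [Fintype.mem_piFinset] at hk
  exact lt_of_lt_of_le (Finset.mem_range.1 (hk j)) (hA j)

theorem mean_eq_cell {d : ℕ} (A : ℕ) (B : Finset (Fin d)) (f : (Fin d → ℝ) → ℝ) (n : Fin d → ℕ)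
    (hA : ∀ j, n j ≤ 2^A) (x : Fin d → ℝ) :
    mixedLogMean B f n x = ∑ k ∈ Fintype.piFinset (fun i => Finset.range (n i)),
      (∏ j, lam (j ∈ B) (n j) (k j)) * walshCoef f k * WD k (cellD A x) := by
  rw [mean_eq]
  refine Finset.sum_congr rfl fun k hk => ?_
  rw [walsh_prod_eq A k (mem_box hA hk)]

theorem KK_lt (β : Prop) [Decidable β] (n i : ℕ) (hi : i ∈ Finset.Ico 1 n) : KK β n i ≤ n := by
  have := Finset.mem_Ico.1 hi
  unfold KK; split_ifs <;> omega

theorem kap_eq {A : ℕ} (β : Prop) [Decidable β] (n : ℕ) (x t : Fin A → Bool) :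
    kap β n x t = ∑ k ∈ Finset.range n, lam β n k * (WF k x * WF k t) := by
  unfold kap lam
  simp only [Finset.sum_mul]
  rw [Finset.sum_comm]
  refine Finset.sum_congr rfl fun i hi => ?_
  unfold DF
  rw [Finset.mul_sum]
  symm
  rw [← Finset.sum_subset (s₁ := Finset.range (KK β n i))]
  · refine Finset.sum_congr rfl fun k hk => ?_
    rw [if_pos (Finset.mem_range.1 hk)]
  · intro k hk
    rw [Finset.mem_range] at *
    exact lt_of_lt_of_le hk (KK_lt β n i hi)
  · intro k _ hk
    rw [Finset.mem_range] at hk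
    rw [if_neg hk, zero_mul]

theorem mean_step {d : ℕ} (A : ℕ) (B : Finset (Fin d)) (σ : (Fin d → Fin A → Bool) → ℝ)
    (n : Fin d → ℕ) (hA : ∀ j, n j ≤ 2^A) (x : Fin d → ℝ) :
    mixedLogMean B (fun x => σ (cellD A x)) n x =
      ((2:ℝ)^(A*d))⁻¹ * ∑ c, (∏ j, kap (j ∈ B) (n j) (cellD A x j) (c j)) * σ c := by
  rw [mean_eq_cell A B _ n hA]
  have h1 : ∀ k ∈ Fintype.piFinset (fun i => Finset.range (n i)),
      walshCoef (fun x => σ (cellD A x)) k = ((2:ℝ)^(A*d))⁻¹ * ∑ c, σ c * WD k c := by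
    intro k hk
    unfold walshCoef
    simp only [walsh_prod_eq A k (mem_box hA hk)]
    exact integral_cell A (fun c => σ c * WD k c)
  have h2 : ∀ c : Fin d → Fin A → Bool, ∏ j, kap (j ∈ B) (n j) (cellD A x j) (c j) =
      ∑ k ∈ Fintype.piFinset (fun i => Finset.range (n i)),
        (∏ j, lam (j ∈ B) (n j) (k j)) * (WD k (cellD A x) * WD k c) := by
    intro c
    simp only [kap_eq]
    rw [Finset.prod_univ_sum]
    refine Finset.sum_congr rfl fun k _ => ?_
    unfold WD
    rw [Finset.prod_mul_distrib, Finset.prod_mul_distrib]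
  simp only [h2]
  rw [Finset.mul_sum]
  simp only [Finset.sum_mul, Finset.mul_sum]
  rw [Finset.sum_comm (s := Finset.univ)]
  refine Finset.sum_congr rfl fun k hk => ?_
  rw [h1 k hk, Finset.mul_sum, Finset.mul_sum, Finset.sum_mul]
  refine Finset.sum_congr rfl fun c _ => ?_
  ring

theorem key_bound {d : ℕ} (B : Finset (Fin d)) (n : Fin d → ℕ) (hn : ∀ j, 2 ≤ n j)
    (f : (Fin d → ℝ) → ℝ) (hf : Integrable f (cubeMeasure d)) :
    ∃ τ : (Fin d → ℝ) → ℝ, Measurable τ ∧ (∃ M, ∀ x, |τ x| ≤ M) ∧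
      (∀ p : ℕ, ∫ x, |τ x|^(p+2) ∂(cubeMeasure d) ≤
        (2^d * 20^B.card * ((p:ℝ)+2)^B.card)^(p+2)) ∧
      ∫ x, |mixedLogMean B f n x| ∂(cubeMeasure d) ≤ ∫ x, |f x| * |τ x| ∂(cubeMeasure d) := by
  obtain ⟨A, hA⟩ : ∃ A, ∀ j, n j ≤ 2^A := by
    refine ⟨∑ j, n j, fun j => ?_⟩
    exact (Finset.single_le_sum (f := n) (fun _ _ => Nat.zero_le _) (Finset.mem_univ j)).trans
      Nat.lt_two_pow_self.le
  set box := Fintype.piFinset (fun i => Finset.range (n i)) with hbox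
  set L : (Fin d → ℕ) → ℝ := fun k => ∏ j, lam (j ∈ B) (n j) (k j) with hL
  set Ψ : (Fin d → Fin A → Bool) → ℝ := fun c => ∑ k ∈ box, L k * walshCoef f k * WD k c with hΨ
  have hT : ∀ x, mixedLogMean B f n x = Ψ (cellD A x) := fun x => mean_eq_cell A B f n hA x
  set σ : (Fin d → Fin A → Bool) → ℝ := fun c => SignType.sign (Ψ c) with hσ
  have hσ1 : ∀ c, |σ c| ≤ 1 := by
    intro c
    simp only [hσ]
    rcases lt_trichotomy (Ψ c) 0 with h | h | h
    · rw [sign_neg h]; simp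
    · rw [h, sign_zero]; simp
    · rw [sign_pos h]; simp
  set s : (Fin d → ℝ) → ℝ := fun x => σ (cellD A x) with hs
  set θ : (Fin d → Fin A → Bool) → ℝ := fun c => ∑ k ∈ box, L k * walshCoef s k * WD k c with hθ
  refine ⟨fun x => θ (cellD A x), measurable_cell_fun A θ, bounded_cell_fun A θ, ?_, ?_⟩
  · intro p
    rw [integral_cell A (fun c => |θ c|^(p+2))]
    have hb := mixed_finite_bound p A d B n hn hA σ
    have e : ∀ c, θ c = ((2:ℝ)^(A*d))⁻¹ *
        ∑ t : Fin d → Fin A → Bool, (∏ j, kap (j ∈ B) (n j) (c j) (t j)) * σ t := by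
      intro c
      have h1 : ∀ k ∈ box, walshCoef s k = ((2:ℝ)^(A*d))⁻¹ * ∑ c, σ c * WD k c := by
        intro k hk
        unfold walshCoef
        simp only [walsh_prod_eq A k (mem_box hA hk)]
        exact integral_cell A (fun c => σ c * WD k c)
      have h2 : ∀ t : Fin d → Fin A → Bool, ∏ j, kap (j ∈ B) (n j) (c j) (t j) =
          ∑ k ∈ box, L k * (WD k c * WD k t) := by
        intro t
        simp only [kap_eq]
        rw [Finset.prod_univ_sum]
        refine Finset.sum_congr rfl fun k _ => ?_
        simp only [WD, hL]
        rw [Finset.prod_mul_distrib, Finset.prod_mul_distrib]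
      simp only [h2]
      rw [Finset.mul_sum]
      simp only [Finset.sum_mul, Finset.mul_sum]
      rw [Finset.sum_comm (s := Finset.univ)]
      refine Finset.sum_congr rfl fun k hk => ?_
      rw [h1 k hk, Finset.mul_sum, Finset.mul_sum, Finset.sum_mul]
      refine Finset.sum_congr rfl fun c _ => ?_
      ring
    simp only [e]
    have hcard : ∑ t : Fin d → Fin A → Bool, |σ t|^(p+2) ≤ 2^(A*d) := by
      calc _ ≤ ∑ t : Fin d → Fin A → Bool, (1:ℝ) :=
            Finset.sum_le_sum fun t _ => pow_le_one₀ (abs_nonneg _) (hσ1 t)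
        _ = _ := by simp [pow_mul]
    rw [inv_mul_le_iff₀ (by positivity), mul_comm ((2:ℝ)^(A*d))]
    refine hb.trans ?_
    gcongr
  · have habs : ∀ x, |mixedLogMean B f n x| = ∑ k ∈ box, L k * walshCoef f k * (s x * WD k (cellD A x)) := by
      intro x
      have : |mixedLogMean B f n x| = s x * Ψ (cellD A x) := by
        rw [hT]; exact (sign_mul_self _).symm
      rw [this, hΨ]
      simp only [Finset.mul_sum]
      exact Finset.sum_congr rfl fun k _ => by ring
    simp only [habs]
    rw [integral_finsetSum]
    · have hc : ∀ k ∈ box, ∫ x, L k * walshCoef f k * (s x * WD k (cellD A x)) ∂(cubeMeasure d)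
          = ∫ x, f x * (L k * walshCoef s k * WD k (cellD A x)) ∂(cubeMeasure d) := by
        intro k hk
        rw [integral_const_mul]
        have e1 : ∫ x, s x * WD k (cellD A x) ∂(cubeMeasure d) = walshCoef s k := by
          unfold walshCoef
          simp only [walsh_prod_eq A k (mem_box hA hk)]
        have e2 : ∫ x, f x * WD k (cellD A x) ∂(cubeMeasure d) = walshCoef f k := by
          unfold walshCoef
          simp only [walsh_prod_eq A k (mem_box hA hk)]
        have e3 : ∀ x, f x * (L k * walshCoef s k * WD k (cellD A x)) =
          (L k * walshCoef s k) * (f x * WD k (cellD A x)) := fun x => by ring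
        simp only [e3]
        rw [integral_const_mul, e1, e2]; ring
      rw [Finset.sum_congr rfl hc, ← integral_finsetSum]
      · have e4 : ∀ x, ∑ k ∈ box, f x * (L k * walshCoef s k * WD k (cellD A x)) =
            f x * θ (cellD A x) := fun x => by rw [hθ, ← Finset.mul_sum]
        simp only [e4]
        refine integral_mono (integrable_mul_cell A θ hf)
          (integrable_mul_cell A (fun c => |θ c|) hf.abs) fun x => ?_
        simp only
        rw [← abs_mul]
        exact le_abs_self _
      · intro k _
        exact integrable_mul_cell A (fun c => L k * walshCoef s k * WD k c) hf
    · intro k _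
      exact integrable_cell A (fun c => L k * walshCoef f k * (σ c * WD k c))

/-! ### Tail estimate -/

/-- The class of test functions produced by `key_bound`. -/
def Good (d b : ℕ) (τ : (Fin d → ℝ) → ℝ) : Prop :=
  Measurable τ ∧ (∃ M, ∀ x, |τ x| ≤ M) ∧
      (∀ p : ℕ, ∫ x, |τ x|^(p+2) ∂(cubeMeasure d) ≤ (2^d * 20^b * ((p:ℝ)+2)^b)^(p+2))

def LL (d b k : ℕ) : ℝ := 4 * (2^d * 20^b * (2*(k:ℝ))^b)

theorem LL_pos (d b k : ℕ) (hk : 1 ≤ k) : 0 < LL d b k := by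
  unfold LL
  have : (0:ℝ) < k := by exact_mod_cast hk
  positivity

theorem tail_pointwise (d b k : ℕ) (hk : 1 ≤ k) (a t : ℝ) (ht : 0 ≤ t) (h1 : 2^k ≤ a)
    (h2 : a < 2^(k+1)) :
    a * t ≤ (4 * (2^d * 20^b) * 4^b) * (a * Real.log (1+a)^b) +
      2^(k+1) * LL d b k / (LL d b k)^(2*k) * t^(2*k) := by
  have hL := LL_pos d b k hk
  have ha : 0 < a := lt_of_lt_of_le (by positivity) h1
  have hlog0 : 0 ≤ Real.log (1+a) := Real.log_nonneg (by linarith)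
  rcases le_or_gt t (LL d b k) with h | h
  · have hlog : (k:ℝ) ≤ 2 * Real.log (1+a) := by
      have e1 : Real.log (2^k) ≤ Real.log (1+a) := Real.log_le_log (by positivity) (by linarith)
      rw [Real.log_pow] at e1
      have := Real.log_two_gt_d9
      have hk0 : (0:ℝ) ≤ k := Nat.cast_nonneg k
      nlinarith
    have e2 : LL d b k ≤ (4 * (2^d * 20^b) * 4^b) * Real.log (1+a)^b := by
      unfold LL
      have : (2*(k:ℝ))^b ≤ (4 * Real.log (1+a))^b := by
        apply pow_le_pow_left₀ (by positivity); linarith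
      rw [mul_pow 4] at this
      calc 4 * (2^d * 20^b * (2*(k:ℝ))^b) ≤ 4 * (2^d * 20^b * (4^b * Real.log (1+a)^b)) := by
            gcongr
        _ = _ := by ring
    have e3 : 0 ≤ 2^(k+1) * LL d b k / (LL d b k)^(2*k) * t^(2*k) := by positivity
    calc a * t ≤ a * ((4 * (2^d * 20^b) * 4^b) * Real.log (1+a)^b) :=
          mul_le_mul_of_nonneg_left (h.trans e2) ha.le
      _ = (4 * (2^d * 20^b) * 4^b) * (a * Real.log (1+a)^b) := by ring
      _ ≤ _ := by linarith
  · have e0 : 0 ≤ (4 * (2^d * 20^b) * 4^b) * (a * Real.log (1+a)^b) := by positivity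
    have e1 : t / LL d b k ≤ (t / LL d b k)^(2*k) :=
      le_self_pow₀ ((one_le_div hL).2 h.le) (by omega)
    have e2 : 2^(k+1) * LL d b k / (LL d b k)^(2*k) * t^(2*k) =
        2^(k+1) * LL d b k * (t / LL d b k)^(2*k) := by rw [div_pow]; ring
    rw [e2]
    have e3 : a * t ≤ 2^(k+1) * LL d b k * (t / LL d b k) := by
      have : 2^(k+1) * LL d b k * (t / LL d b k) = 2^(k+1) * t := by field_simp
      rw [this]; exact mul_le_mul_of_nonneg_right h2.le ht
    have e4 : 2^(k+1) * LL d b k * (t / LL d b k) ≤ 2^(k+1) * LL d b k * (t / LL d b k)^(2*k) :=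
      mul_le_mul_of_nonneg_left e1 (by positivity)
    linarith

theorem good_moment (d b k : ℕ) (hk : 1 ≤ k) (τ : (Fin d → ℝ) → ℝ) (hτ : Good d b τ) :
    ∫⁻ x, ENNReal.ofReal (2^(k+1) * LL d b k / (LL d b k)^(2*k) * |τ x|^(2*k)) ∂(cubeMeasure d)
      ≤ ENNReal.ofReal (2 * LL d b k * (1/8)^k) := by
  have hL := LL_pos d b k hk
  obtain ⟨hm, ⟨M, hM⟩, hp⟩ := hτ
  have hInteg : Integrable (fun x => |τ x|^(2*k)) (cubeMeasure d) := by
    refine Integrable.of_bound (C := M^(2*k)) (hm.abs.pow_const _).aestronglyMeasurable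
      (Eventually.of_forall fun x => ?_)
    rw [Real.norm_eq_abs, abs_pow, abs_abs]
    exact pow_le_pow_left₀ (abs_nonneg _) (hM x) _
  rw [← ofReal_integral_eq_lintegral_ofReal (hInteg.const_mul _)
    (Eventually.of_forall fun x => by positivity)]
  apply ENNReal.ofReal_le_ofReal
  rw [integral_const_mul]
  have h := hp (2*k-2)
  have e : 2*k-2+2 = 2*k := by omega
  have e' : ((2*k-2 : ℕ):ℝ) + 2 = 2 * k := by
    have : ((2*k-2+2 : ℕ):ℝ) = ((2*k : ℕ):ℝ) := by rw [e]
    push_cast at this ⊢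
    exact this
  rw [e, e'] at h
  have e5 : (2^d * 20^b * (2*(k:ℝ))^b) = LL d b k / 4 := by unfold LL; ring
  rw [e5] at h
  calc _ ≤ 2^(k+1) * LL d b k / (LL d b k)^(2*k) * (LL d b k / 4)^(2*k) :=
        mul_le_mul_of_nonneg_left h (by positivity)
    _ = 2 * LL d b k * (2^k * (1/4)^(2*k)) := by
        rw [div_pow, div_pow, one_pow]; field_simp; ring
    _ = _ := by
        rw [pow_mul, ← mul_pow]; norm_num

theorem summable_u (d b : ℕ) : ∑' k, ENNReal.ofReal (2 * LL d b k * (1/8)^k) ≠ ⊤ := by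
  have h : Summable (fun k : ℕ => 2 * LL d b k * (1/8:ℝ)^k) := by
    have := (summable_pow_mul_geometric_of_norm_lt_one b (r := (1/8:ℝ)) (by norm_num)).mul_left
      (2 * 4 * (2^d*20^b*2^b))
    refine this.congr fun k => ?_
    unfold LL; rw [mul_pow]; ring
  exact h.tsum_ofReal_ne_top

theorem tail_bound {d : ℕ} (b : ℕ) (f : (Fin d → ℝ) → ℝ) (hf : Measurable f)
    (hfi : Integrable f (cubeMeasure d))
    (hfl : Integrable (fun x => |f x| * Real.log (1 + |f x|) ^ b) (cubeMeasure d))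
    (ε : ℝ) (hε : 0 < ε) :
    ∃ K : ℕ, ∀ τ, Good d b τ →
      ∫ x, |f x - (if |f x| < 2^K then f x else 0)| * |τ x| ∂(cubeMeasure d) ≤ ε := by
  set C : ℝ := 4 * (2^d * 20^b) * 4^b with hC
  have hC0 : 0 < C := by positivity
  set h : (Fin d → ℝ) → ℝ := fun x => C * (|f x| * Real.log (1 + |f x|) ^ b) with hh
  have hInteg : Integrable h (cubeMeasure d) := hfl.const_mul C
  have hh0 : ∀ x, 0 ≤ h x := fun x => by
    have : 0 ≤ Real.log (1 + |f x|) := Real.log_nonneg (by linarith [abs_nonneg (f x)])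
    positivity
  set S : ℕ → Set (Fin d → ℝ) := fun K => {x | (2:ℝ)^K ≤ |f x|} with hS
  have hSm : ∀ K, MeasurableSet (S K) := fun K => measurableSet_le measurable_const hf.abs
  have hanti : Antitone S := by
    intro K K' hKK x hx
    have h2 : (2:ℝ)^K ≤ 2^K' := pow_le_pow_right₀ (by norm_num) hKK
    exact h2.trans hx
  have hemp : ⋂ n, S n = ∅ := by
    ext x
    simp only [Set.mem_iInter, Set.mem_empty_iff_false, iff_false, not_forall]
    obtain ⟨n, hn⟩ := pow_unbounded_of_one_lt |f x| (by norm_num : (1:ℝ) < 2)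
    exact ⟨n, fun hx => absurd hn (not_lt.2 hx)⟩
  have t1 := tendsto_setIntegral_of_antitone hSm hanti ⟨0, hInteg.integrableOn⟩
  rw [hemp, setIntegral_empty] at t1
  have t2 := ENNReal.tendsto_sum_nat_add _ (summable_u d b)
  have ev1 := t1.eventually (gt_mem_nhds (half_pos hε))
  have ev2 := t2.eventually (gt_mem_nhds (ENNReal.ofReal_pos.2 (half_pos hε)))
  obtain ⟨K, ⟨hK1, hK2⟩, hK0⟩ := ((ev1.and ev2).and (eventually_ge_atTop 1)).exists
  refine ⟨K, fun τ hτ => ?_⟩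
  set v : ℕ → ℝ := fun k => 2^(k+1) * LL d b k / (LL d b k)^(2*k) with hv
  have hpt : ∀ x, ENNReal.ofReal (|f x - (if |f x| < 2^K then f x else 0)| * |τ x|) ≤
      ENNReal.ofReal ((S K).indicator h x) +
        ∑' k, ENNReal.ofReal (v (k+K) * |τ x|^(2*(k+K))) := by
    intro x
    split_ifs with hx
    · simp
    · have hx' := not_lt.1 hx
      obtain ⟨k, hk1, hk2⟩ := exists_nat_pow_near (x := |f x|) (y := (2:ℝ))
        ((one_le_pow₀ (by norm_num)).trans hx') (by norm_num)
      have hkK : K ≤ k := by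
        by_contra hcon
        have : (2:ℝ)^(k+1) ≤ 2^K := pow_le_pow_right₀ (by norm_num) (by omega)
        linarith
      obtain ⟨m, rfl⟩ := Nat.exists_eq_add_of_le' hkK
      have := tail_pointwise d b (m+K) (by omega) |f x| |τ x| (abs_nonneg _) hk1 hk2
      rw [sub_zero, Set.indicator_of_mem (show x ∈ S K from hx')]
      refine (ENNReal.ofReal_le_ofReal this).trans (ENNReal.ofReal_add_le.trans ?_)
      gcongr
      exact ENNReal.le_tsum (f := fun k => ENNReal.ofReal (v (k+K) * |τ x|^(2*(k+K)))) m
  have hτm := hτ.1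
  have hmeas : ∀ k, Measurable fun x => ENNReal.ofReal (v (k+K) * |τ x|^(2*(k+K))) := fun k =>
    (measurable_const.mul (hτm.abs.pow_const _)).ennreal_ofReal
  have key : ∫⁻ x, ENNReal.ofReal (|f x - (if |f x| < 2^K then f x else 0)| * |τ x|)
      ∂(cubeMeasure d) ≤ ENNReal.ofReal ε := by
    refine (lintegral_mono hpt).trans ?_
    rw [lintegral_add_right _ (Measurable.tsum hmeas),
      lintegral_tsum fun k => (hmeas k).aemeasurable]
    have a1 : ∫⁻ x, ENNReal.ofReal ((S K).indicator h x) ∂(cubeMeasure d) ≤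
        ENNReal.ofReal (ε/2) := by
      rw [← ofReal_integral_eq_lintegral_ofReal (hInteg.indicator (hSm K))
        (Eventually.of_forall fun x => Set.indicator_nonneg (fun y _ => hh0 y) x),
        integral_indicator (hSm K)]
      exact ENNReal.ofReal_le_ofReal hK1.le
    have a2 : ∑' k, ∫⁻ x, ENNReal.ofReal (v (k+K) * |τ x|^(2*(k+K))) ∂(cubeMeasure d) ≤
        ENNReal.ofReal (ε/2) := by
      refine (ENNReal.tsum_le_tsum fun k => ?_).trans hK2.le
      exact good_moment d b (k+K) (by omega) τ hτ
    calc _ ≤ ENNReal.ofReal (ε/2) + ENNReal.ofReal (ε/2) := add_le_add a1 a2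
      _ = ENNReal.ofReal ε := by
        rw [← ENNReal.ofReal_add (by positivity) (by positivity), add_halves]
  rw [integral_eq_lintegral_of_nonneg_ae (Eventually.of_forall fun x => by positivity)]
  · exact ENNReal.toReal_le_of_le_ofReal hε.le key
  · apply Measurable.aestronglyMeasurable
    exact ((hf.sub (Measurable.ite (measurableSet_lt hf.abs measurable_const) hf
      measurable_const)).abs).mul hτm.abs

/-! ### Approximation by dyadic step functions -/

theorem good_one (d b : ℕ) : Good d b (fun _ => 1) := by
  refine ⟨measurable_const, ⟨1, fun x => by simp⟩, fun p => ?_⟩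
  simp only [abs_one, one_pow, integral_const, probReal_univ, smul_eq_mul, mul_one]
  apply one_le_pow₀
  have h1 : (1:ℝ) ≤ 2^d := one_le_pow₀ (by norm_num)
  have h2 : (1:ℝ) ≤ 20^b := one_le_pow₀ (by norm_num)
  have h3 : (1:ℝ) ≤ ((p:ℝ)+2)^b := one_le_pow₀ (by linarith [(Nat.cast_nonneg p : (0:ℝ) ≤ p)])
  exact one_le_mul_of_one_le_of_one_le (one_le_mul_of_one_le_of_one_le h1 h2) h3

theorem dig_close (A : ℕ) : ∀ x ∈ Set.Ico (0:ℝ) 1, ∀ y ∈ Set.Ico (0:ℝ) 1, dig A x = dig A y →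
    |x - y| ≤ (1/2)^A := by
  induction A with
  | zero =>
    intro x hx y hy _
    rw [pow_zero, abs_le]
    constructor <;> linarith [hx.1, hx.2, hy.1, hy.2]
  | succ A ih =>
    intro x hx y hy h
    have hfr : ∀ x : ℝ, x ∈ Set.Ico (0:ℝ) 1 → (dig (A+1) x 0 = decide (¬ x < 1/2)) := by
      intro x hx
      simp only [dig, Fin.val_zero, pow_zero, one_mul]
      rw [Int.fract_eq_self.2 ⟨hx.1, hx.2⟩]
    have h0 : (x < 1/2) ↔ (y < 1/2) := by
      have := congrFun h 0
      rw [hfr x hx, hfr y hy, decide_eq_decide] at this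
      exact not_iff_not.1 this
    have h1 : dig A (2*x) = dig A (2*y) := by
      funext j
      rw [← dig_succ, ← dig_succ, h]
    have hb : ∀ z : ℝ, |2 * z| ≤ (1/2)^A → |z| ≤ (1/2)^(A+1) := by
      intro z hz
      rw [abs_mul, abs_two] at hz
      rw [pow_succ]; linarith
    apply hb
    by_cases hx2 : x < 1/2
    · have hy2 := h0.1 hx2
      have := ih (2*x) ⟨by linarith [hx.1], by linarith⟩ (2*y) ⟨by linarith [hy.1], by linarith⟩ h1
      rwa [show 2 * (x - y) = 2*x - 2*y by ring]
    · have hy2 : ¬ y < 1/2 := fun hh => hx2 (h0.2 hh)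
      have := ih (2*x-1) ⟨by linarith [not_lt.1 hx2], by linarith [hx.2]⟩ (2*y-1)
        ⟨by linarith [not_lt.1 hy2], by linarith [hy.2]⟩ (by rw [dig_sub_one, dig_sub_one, h1])
      rwa [show 2 * (x - y) = 2*x - 1 - (2*y - 1) by ring]

theorem ae_cube (d : ℕ) : ∀ᵐ x ∂(cubeMeasure d), x ∈ unitCube d := by
  unfold cubeMeasure
  exact ae_restrict_mem (measurableSet_unitCube d)

theorem step_uniform {d : ℕ} (g : (Fin d → ℝ) → ℝ) (hg : UniformContinuous g) (δ : ℝ) (hδ : 0 < δ) :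
    ∃ (A : ℕ) (σ : (Fin d → Fin A → Bool) → ℝ), ∀ x ∈ unitCube d, |g x - σ (cellD A x)| ≤ δ := by
  classical
  obtain ⟨r, hr, hgr⟩ := Metric.uniformContinuous_iff.1 hg δ hδ
  obtain ⟨A, hA⟩ := exists_pow_lt_of_lt_one hr (by norm_num : (1/2:ℝ) < 1)
  refine ⟨A, fun c => if h : ∃ y ∈ unitCube d, cellD A y = c then g h.choose else 0, fun x hx => ?_⟩
  have h : ∃ y ∈ unitCube d, cellD A y = cellD A x := ⟨x, hx, rfl⟩
  simp only
  rw [dif_pos h]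
  obtain ⟨hy1, hy2⟩ := h.choose_spec
  rw [← Real.dist_eq]
  refine (hgr ?_).le
  refine lt_of_le_of_lt ?_ hA
  rw [dist_pi_le_iff (by positivity)]
  intro j
  rw [Real.dist_eq]
  exact dig_close A _ (hx j (Set.mem_univ j)) _ (hy1 j (Set.mem_univ j)) (congrFun hy2 j).symm

theorem step_L2 {d : ℕ} (f : (Fin d → ℝ) → ℝ) (hf : Measurable f) (M : ℝ) (hM : ∀ x, |f x| ≤ M)
    (η : ℝ) (hη : 0 < η) :
    ∃ (A : ℕ) (σ : (Fin d → Fin A → Bool) → ℝ),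
      ∫ x, (f x - σ (cellD A x))^2 ∂(cubeMeasure d) ≤ η := by
  have hmem : MemLp f (ENNReal.ofReal 2) (cubeMeasure d) :=
    MemLp.of_bound hf.aestronglyMeasurable M (Eventually.of_forall fun x => hM x)
  obtain ⟨g, hgc, hgi, hcont, hgm⟩ := hmem.exists_hasCompactSupport_integral_rpow_sub_le
    (by norm_num) (show 0 < η/4 by positivity)
  have hgu := hgc.uniformContinuous_of_continuous hcont
  obtain ⟨A, σ, hσ⟩ := step_uniform g hgu (Real.sqrt (η/4)) (by positivity)
  refine ⟨A, σ, ?_⟩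
  have hg2 : Integrable (fun x => (f x - g x)^2) (cubeMeasure d) := by
    have : MemLp (fun x => f x - g x) 2 (cubeMeasure d) := by
      have := hmem.sub hgm
      rw [ENNReal.ofReal_ofNat] at this
      exact this
    exact this.integrable_sq
  have hgi2 : ∫ x, (f x - g x)^2 ∂(cubeMeasure d) ≤ η/4 := by
    simpa using hgi
  calc ∫ x, (f x - σ (cellD A x))^2 ∂(cubeMeasure d)
      ≤ ∫ x, (2 * (f x - g x)^2 + 2 * (η/4)) ∂(cubeMeasure d) := by
        apply integral_mono_of_nonneg (Eventually.of_forall fun x => by positivity)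
          ((hg2.const_mul 2).add (integrable_const _))
        filter_upwards [ae_cube d] with x hx
        have h1 := hσ x hx
        have h2 : (g x - σ (cellD A x))^2 ≤ η/4 := by
          rw [← Real.sq_sqrt (show 0 ≤ η/4 by positivity), ← sq_abs]
          exact pow_le_pow_left₀ (abs_nonneg _) h1 2
        change (f x - σ (cellD A x))^2 ≤ 2 * (f x - g x)^2 + 2 * (η/4)
        nlinarith [sq_nonneg ((f x - g x) - (g x - σ (cellD A x)))]
    _ = 2 * ∫ x, (f x - g x)^2 ∂(cubeMeasure d) + 2 * (η/4) := by
        rw [integral_add (hg2.const_mul 2) (integrable_const _), integral_const_mul]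
        simp
    _ ≤ η := by linarith

theorem step_approx {d : ℕ} (b : ℕ) (f : (Fin d → ℝ) → ℝ) (hf : Measurable f)
    (hfi : Integrable f (cubeMeasure d))
    (hfl : Integrable (fun x => |f x| * Real.log (1 + |f x|) ^ b) (cubeMeasure d))
    (ε : ℝ) (hε : 0 < ε) :
    ∃ (A : ℕ) (σ : (Fin d → Fin A → Bool) → ℝ), ∀ τ, Good d b τ →
      ∫ x, |f x - σ (cellD A x)| * |τ x| ∂(cubeMeasure d) ≤ ε := by
  obtain ⟨K, hK⟩ := tail_bound b f hf hfi hfl (ε/2) (by positivity)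
  set f1 : (Fin d → ℝ) → ℝ := fun x => if |f x| < 2^K then f x else 0 with hf1
  have hf1m : Measurable f1 :=
    Measurable.ite (measurableSet_lt hf.abs measurable_const) hf measurable_const
  have hf1b : ∀ x, |f1 x| ≤ 2^K := by
    intro x
    simp only [hf1]
    split_ifs with h
    · exact h.le
    · simp
  set D : ℝ := (2^d * 20^b * 2^b)^2 with hD
  have hD0 : 0 < D := by positivity
  obtain ⟨A, σ, hσ⟩ := step_L2 f1 hf1m (2^K) hf1b (ε/2 * (ε/2/D)) (by positivity)
  refine ⟨A, σ, fun τ hτ => ?_⟩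
  obtain ⟨hm, ⟨M, hM⟩, hp⟩ := hτ
  have hp0 : ∫ x, |τ x|^2 ∂(cubeMeasure d) ≤ D := by
    have := hp 0
    simpa [hD] using this
  obtain ⟨M', hM'⟩ := bounded_cell_fun (d := d) A σ
  have hum : Measurable fun x => f1 x - σ (cellD A x) := hf1m.sub (measurable_cell_fun A σ)
  have hub : ∀ x, |f1 x - σ (cellD A x)| ≤ 2^K + M' := fun x =>
    (abs_sub _ _).trans (add_le_add (hf1b x) (hM' x))
  have hu2 : Integrable (fun x => (f1 x - σ (cellD A x))^2) (cubeMeasure d) := by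
    refine Integrable.of_bound (C := (2^K+M')^2) (hum.pow_const _).aestronglyMeasurable
      (Eventually.of_forall fun x => ?_)
    rw [Real.norm_eq_abs, abs_pow]
    exact pow_le_pow_left₀ (abs_nonneg _) (hub x) _
  have ht2 : Integrable (fun x => |τ x|^2) (cubeMeasure d) := by
    refine Integrable.of_bound (C := M^2) (hm.abs.pow_const _).aestronglyMeasurable
      (Eventually.of_forall fun x => ?_)
    rw [Real.norm_eq_abs, abs_pow, abs_abs]
    exact pow_le_pow_left₀ (abs_nonneg _) (hM x) _
  have hff1 : Integrable (fun x => |f x - f1 x| * |τ x|) (cubeMeasure d) := by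
    refine Integrable.mul_bdd (c := M) ?_ hm.abs.aestronglyMeasurable
      (Eventually.of_forall fun x => by rw [Real.norm_eq_abs, abs_abs]; exact hM x)
    refine (hfi.sub ?_).abs
    exact Integrable.of_bound (C := 2^K) hf1m.aestronglyMeasurable (Eventually.of_forall hf1b)
  set s : ℝ := ε/2/D with hs
  have hs0 : 0 < s := by positivity
  calc ∫ x, |f x - σ (cellD A x)| * |τ x| ∂(cubeMeasure d)
      ≤ ∫ x, (|f x - f1 x| * |τ x| + ((1/(2*s)) * (f1 x - σ (cellD A x))^2 + (s/2) * |τ x|^2))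
          ∂(cubeMeasure d) := by
        refine integral_mono_of_nonneg (Eventually.of_forall fun x => by positivity)
          (hff1.add ((hu2.const_mul _).add (ht2.const_mul _))) (Eventually.of_forall fun x => ?_)
        have e1 : |f x - σ (cellD A x)| ≤ |f x - f1 x| + |f1 x - σ (cellD A x)| :=
          abs_sub_le _ _ _
        have e2 : |f1 x - σ (cellD A x)| * |τ x| ≤
            (1/(2*s)) * (f1 x - σ (cellD A x))^2 + (s/2) * |τ x|^2 := by
          rw [← sq_abs (f1 x - σ (cellD A x))]
          have : (1/(2*s)) * |f1 x - σ (cellD A x)|^2 + (s/2) * |τ x|^2 -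
              |f1 x - σ (cellD A x)| * |τ x| =
              (1/(2*s)) * (|f1 x - σ (cellD A x)| - s * |τ x|)^2 := by field_simp; ring
          have h0 : 0 ≤ (1/(2*s)) * (|f1 x - σ (cellD A x)| - s * |τ x|)^2 := by positivity
          linarith
        have e3 := mul_le_mul_of_nonneg_right e1 (abs_nonneg (τ x))
        simp only
        linarith
    _ = ∫ x, |f x - f1 x| * |τ x| ∂(cubeMeasure d) +
          ((1/(2*s)) * ∫ x, (f1 x - σ (cellD A x))^2 ∂(cubeMeasure d) +
            (s/2) * ∫ x, |τ x|^2 ∂(cubeMeasure d)) := by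
        have hsum : Integrable (fun x => (1/(2*s)) * (f1 x - σ (cellD A x))^2 + (s/2) * |τ x|^2)
            (cubeMeasure d) := (hu2.const_mul _).add (ht2.const_mul _)
        rw [integral_add hff1 hsum,
          integral_add (hu2.const_mul _) (ht2.const_mul _), integral_const_mul, integral_const_mul]
    _ ≤ ε/2 + ((1/(2*s)) * (ε/2 * s) + (s/2) * D) := by
        have := hK τ ⟨hm, ⟨M, hM⟩, hp⟩
        gcongr
    _ = ε := by
        rw [hs]; field_simp; ring

/-! ### Walsh polynomials -/

theorem Dk_full {A : ℕ} (x t : Fin A → Bool) : DF (2^A) x t = if x = t then 2^A else 0 := by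
  classical
  have hdiag : DF (2^A) t t = 2^A := by
    unfold DF
    simp [WF_mul_self]
  have hnn : ∀ x, 0 ≤ DF (2^A) x t := fun x => by rw [DF_eq]; exact Dk_two_pow_nonneg A _
  have hsum : ∑ x : Fin A → Bool, DF (2^A) x t = 2^A := by
    simp only [DF_eq]
    simp only [fun x => xorF_comm x t]
    rw [sum_xorF t (fun z => Dk (2^A) z), sum_Dk A _ (by positivity) le_rfl]
  split_ifs with h
  · rw [h, hdiag]
  · rw [← Finset.add_sum_erase _ _ (Finset.mem_univ t), hdiag] at hsum
    have h0 : ∑ x ∈ Finset.univ.erase t, DF (2^A) x t = 0 := by linarith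
    exact (Finset.sum_eq_zero_iff_of_nonneg fun x _ => hnn x).1 h0 x
      (Finset.mem_erase.2 ⟨h, Finset.mem_univ x⟩)

theorem step_expand {d : ℕ} (A : ℕ) (σ : (Fin d → Fin A → Bool) → ℝ) :
    ∃ a : (Fin d → ℕ) → ℝ, ∀ x : Fin d → ℝ, σ (cellD A x) =
      ∑ k ∈ Fintype.piFinset (fun _ : Fin d => Finset.range (2^A)),
        a k * ∏ i, walsh (k i) (x i) := by
  classical
  refine ⟨fun k => ((2:ℝ)^(A*d))⁻¹ * ∑ c, σ c * WD k c, fun x => ?_⟩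
  have h1 : ∀ c : Fin d → Fin A → Bool,
      ∑ k ∈ Fintype.piFinset (fun _ : Fin d => Finset.range (2^A)), WD k (cellD A x) * WD k c =
      if cellD A x = c then (2:ℝ)^(A*d) else 0 := by
    intro c
    have : ∏ i, DF (2^A) (cellD A x i) (c i) =
        ∑ k ∈ Fintype.piFinset (fun _ : Fin d => Finset.range (2^A)), WD k (cellD A x) * WD k c := by
      unfold DF
      rw [Finset.prod_univ_sum]
      refine Finset.sum_congr rfl fun k _ => ?_
      unfold WD
      rw [Finset.prod_mul_distrib]
    rw [← this]
    simp only [Dk_full]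
    split_ifs with h
    · rw [Finset.prod_congr rfl fun i _ => if_pos (congrFun h i)]
      simp [pow_mul]
    · obtain ⟨i, hi⟩ := Function.ne_iff.1 h
      exact Finset.prod_eq_zero (Finset.mem_univ i) (if_neg hi)
  have h2 : ∀ k ∈ Fintype.piFinset (fun _ : Fin d => Finset.range (2^A)),
      (((2:ℝ)^(A*d))⁻¹ * ∑ c, σ c * WD k c) * ∏ i, walsh (k i) (x i) =
      ∑ c, ((2:ℝ)^(A*d))⁻¹ * σ c * (WD k (cellD A x) * WD k c) := by
    intro k hk
    rw [walsh_prod_eq A k (mem_box (fun _ => le_rfl) hk), Finset.mul_sum, Finset.sum_mul]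
    exact Finset.sum_congr rfl fun c _ => by ring
  rw [Finset.sum_congr rfl h2, Finset.sum_comm]
  simp only [← Finset.mul_sum, h1]
  simp only [mul_ite, mul_zero, Finset.sum_ite_eq, Finset.mem_univ, if_true]
  field_simp

theorem walsh_orth {d : ℕ} (k l : Fin d → ℕ) :
    ∫ x, (∏ i, walsh (k i) (x i)) * ∏ i, walsh (l i) (x i) ∂(cubeMeasure d) =
      if k = l then 1 else 0 := by
  obtain ⟨A, hA⟩ : ∃ A, ∀ j, k j < 2^A ∧ l j < 2^A := by
    refine ⟨∑ j, (k j + l j), fun j => ?_⟩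
    have h1 : k j + l j ≤ ∑ j, (k j + l j) :=
      Finset.single_le_sum (f := fun j => k j + l j) (fun _ _ => Nat.zero_le _) (Finset.mem_univ j)
    have h2 : ∑ j, (k j + l j) < 2^(∑ j, (k j + l j)) := Nat.lt_two_pow_self
    omega
  simp only [walsh_prod_eq A k fun j => (hA j).1, walsh_prod_eq A l fun j => (hA j).2]
  rw [integral_cell A (fun c => WD k c * WD l c)]
  have h1 : ∑ c : Fin d → Fin A → Bool, WD k c * WD l c =
      ∏ i, ∑ x : Fin A → Bool, WF (k i ^^^ l i) x := by
    rw [Finset.prod_univ_sum, Fintype.piFinset_univ]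
    refine Finset.sum_congr rfl fun c _ => ?_
    unfold WD
    rw [← Finset.prod_mul_distrib]
    exact Finset.prod_congr rfl fun i _ => (WF_xor _ _ _).symm
  rw [h1, Finset.prod_congr rfl fun i _ => sum_WF A _ (Nat.xor_lt_two_pow (hA i).1 (hA i).2)]
  split_ifs with h
  · subst h
    simp [pow_mul]
  · obtain ⟨i, hi⟩ := Function.ne_iff.1 h
    rw [Finset.prod_eq_zero (Finset.mem_univ i), mul_zero]
    rw [if_neg]
    rwa [Nat.xor_eq_zero_iff]

theorem integrable_walsh_prod {d : ℕ} (k : Fin d → ℕ) {f : (Fin d → ℝ) → ℝ}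
    (hf : Integrable f (cubeMeasure d)) :
    Integrable (fun x => f x * ∏ i, walsh (k i) (x i)) (cubeMeasure d) := by
  obtain ⟨A, hA⟩ : ∃ A, ∀ j, k j < 2^A := by
    refine ⟨∑ j, k j, fun j => ?_⟩
    exact lt_of_le_of_lt (Finset.single_le_sum (f := k) (fun _ _ => Nat.zero_le _)
      (Finset.mem_univ j)) Nat.lt_two_pow_self
  simp only [walsh_prod_eq A k hA]
  exact integrable_mul_cell A (WD k) hf

theorem mean_sub {d : ℕ} (B : Finset (Fin d)) (f g : (Fin d → ℝ) → ℝ)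
    (hf : Integrable f (cubeMeasure d)) (hg : Integrable g (cubeMeasure d)) (n : Fin d → ℕ)
    (x : Fin d → ℝ) :
    mixedLogMean B (fun x => f x - g x) n x = mixedLogMean B f n x - mixedLogMean B g n x := by
  simp only [mean_eq]
  rw [← Finset.sum_sub_distrib]
  refine Finset.sum_congr rfl fun k _ => ?_
  have : walshCoef (fun x => f x - g x) k = walshCoef f k - walshCoef g k := by
    unfold walshCoef
    rw [← integral_sub (integrable_walsh_prod k hf) (integrable_walsh_prod k hg)]
    simp only [sub_mul]
  rw [this]; ring

theorem mean_poly {d : ℕ} (B : Finset (Fin d)) (m : ℕ) (a : (Fin d → ℕ) → ℝ) (g : (Fin d → ℝ) → ℝ)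
    (hg : ∀ x, g x = ∑ k ∈ Fintype.piFinset (fun _ : Fin d => Finset.range m),
        a k * ∏ i, walsh (k i) (x i)) (n : Fin d → ℕ) (hn : ∀ j, m ≤ n j) (x : Fin d → ℝ) :
    mixedLogMean B g n x = ∑ k ∈ Fintype.piFinset (fun _ : Fin d => Finset.range m),
        (∏ j, lam (j ∈ B) (n j) (k j)) * (a k * ∏ i, walsh (k i) (x i)) := by
  classical
  have hc : ∀ l, walshCoef g l =
      if l ∈ Fintype.piFinset (fun _ : Fin d => Finset.range m) then a l else 0 := by
    intro l
    unfold walshCoef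
    simp only [hg, Finset.sum_mul]
    rw [integral_finsetSum]
    · simp only [mul_assoc, integral_const_mul, walsh_orth]
      simp
    · intro k _
      have h1 := integrable_walsh_prod k (integrable_const (μ := cubeMeasure d) (a k))
      exact integrable_walsh_prod l h1
  rw [mean_eq]
  symm
  have hsub : Fintype.piFinset (fun _ : Fin d => Finset.range m) ⊆
      Fintype.piFinset (fun i => Finset.range (n i)) := by
    intro k hk
    rw [Fintype.mem_piFinset] at hk ⊢
    intro j
    exact Finset.mem_range.2 (lt_of_lt_of_le (Finset.mem_range.1 (hk j)) (hn j))
  rw [← Finset.sum_subset hsub]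
  · refine Finset.sum_congr rfl fun k hk => ?_
    rw [hc, if_pos hk]; ring
  · intro k _ hk
    rw [hc, if_neg hk]; ring

/-! ### Convergence of the multipliers -/

theorem logSum_tendsto : Tendsto logSum atTop atTop := by
  rw [← tendsto_add_atTop_iff_nat 1]
  refine Real.tendsto_sum_range_one_div_nat_succ_atTop.congr fun n => ?_
  rw [logSum_eq, Finset.sum_Ico_eq_sum_range]
  refine Finset.sum_congr (by simp) fun i _ => ?_
  push_cast; rw [add_comm]

theorem lam_bound (β : Prop) [Decidable β] (n k : ℕ) (hn : 2 ≤ n) :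
    |1 - lam β n k| ≤ k / logSum n := by
  have hl := logSum_pos n hn
  have h1 : 1 - lam β n k = ∑ i ∈ (Finset.Ico 1 n).filter (fun i => ¬ k < KK β n i),
      1 / ((i:ℝ) * logSum n) := by
    unfold lam
    have h0 := sum_weights n hn
    rw [Finset.sum_filter]
    refine (congrArg (fun y => y - _) h0.symm).trans ?_
    rw [← Finset.sum_sub_distrib]
    refine Finset.sum_congr rfl fun i _ => ?_
    split_ifs <;> simp
  rw [h1, abs_of_nonneg (Finset.sum_nonneg fun i _ => by positivity)]
  have h2 : ((Finset.Ico 1 n).filter (fun i => ¬ k < KK β n i)).card ≤ k := by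
    by_cases hβ : β
    · have : (Finset.Ico 1 n).filter (fun i => ¬ k < KK β n i) ⊆ Finset.Ico (n-k) n := by
        intro i hi
        simp only [Finset.mem_filter, Finset.mem_Ico, KK, if_pos hβ] at hi ⊢
        omega
      refine (Finset.card_le_card this).trans ?_
      rw [Nat.card_Ico]; omega
    · have : (Finset.Ico 1 n).filter (fun i => ¬ k < KK β n i) ⊆ Finset.Ico 1 (k+1) := by
        intro i hi
        simp only [Finset.mem_filter, Finset.mem_Ico, KK, if_neg hβ] at hi ⊢
        omega
      refine (Finset.card_le_card this).trans ?_
      rw [Nat.card_Ico]; omega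
  have h3 : ∀ i ∈ (Finset.Ico 1 n).filter (fun i => ¬ k < KK β n i),
      1 / ((i:ℝ) * logSum n) ≤ 1 / logSum n := by
    intro i hi
    have : (1:ℝ) ≤ i := by exact_mod_cast (Finset.mem_Ico.1 (Finset.mem_filter.1 hi).1).1
    apply one_div_le_one_div_of_le hl
    nlinarith
  refine (Finset.sum_le_card_nsmul _ _ _ h3).trans ?_
  rw [nsmul_eq_mul, mul_one_div]
  gcongr

theorem lam_tendsto (β : Prop) [Decidable β] (k : ℕ) :
    Tendsto (fun n => lam β n k) atTop (nhds 1) := by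
  have h : Tendsto (fun n => 1 - lam β n k) atTop (nhds 0) := by
    refine squeeze_zero_norm' (a := fun n => (k:ℝ) / logSum n) ?_
      (Tendsto.div_atTop tendsto_const_nhds logSum_tendsto)
    filter_upwards [eventually_ge_atTop 2] with n hn
    exact lam_bound β n k hn
  have := h.const_sub 1
  simpa using this

theorem poly_conv {d : ℕ} (B : Finset (Fin d)) (A : ℕ) (σ : (Fin d → Fin A → Bool) → ℝ) :
    ∀ ε > (0:ℝ), ∃ N : ℕ, ∀ n : Fin d → ℕ, (∀ j, N ≤ n j) → ∀ x,
      |mixedLogMean B (fun x => σ (cellD A x)) n x - σ (cellD A x)| < ε := by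
  intro ε hε
  obtain ⟨a, ha⟩ := step_expand A σ
  have ht : Tendsto (fun n : Fin d → ℕ =>
      ∑ k ∈ Fintype.piFinset (fun _ : Fin d => Finset.range (2^A)),
        |(∏ j, lam (j ∈ B) (n j) (k j)) - 1| * |a k|) atTop (nhds 0) := by
    have : (0:ℝ) = ∑ k ∈ Fintype.piFinset (fun _ : Fin d => Finset.range (2^A)),
        |(∏ _j : Fin d, (1:ℝ)) - 1| * |a k| := by simp
    rw [this]
    refine tendsto_finsetSum _ fun k _ => ?_
    refine Tendsto.mul_const _ (Tendsto.abs (Tendsto.sub_const ?_ 1))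
    refine tendsto_finsetProd _ fun j _ => ?_
    refine (lam_tendsto (j ∈ B) (k j)).comp ?_
    exact tendsto_atTop.2 fun b => (eventually_ge_atTop (fun _ => b)).mono (fun n h => h j)
  obtain ⟨N, hN⟩ := eventually_atTop.1 (ht.eventually (gt_mem_nhds hε))
  refine ⟨2^A + ∑ j, N j, fun n hn x => ?_⟩
  have h1 := hN n (fun j => by
    have := Finset.single_le_sum (f := N) (fun _ _ => Nat.zero_le _) (Finset.mem_univ j)
    exact this.trans ((Nat.le_add_left _ _).trans (hn j)))
  refine lt_of_le_of_lt ?_ h1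
  rw [mean_poly B (2^A) a _ ha n (fun j => (Nat.le_add_right _ _).trans (hn j)), ha, ← Finset.sum_sub_distrib]
  refine (Finset.abs_sum_le_sum_abs _ _).trans (Finset.sum_le_sum fun k hk => ?_)
  rw [walsh_prod_eq A k (mem_box (fun _ => le_rfl) hk)]
  have hW : |WD k (cellD A x)| = 1 := by
    unfold WD
    rw [Finset.abs_prod]
    exact Finset.prod_eq_one fun i _ => WF_abs _ _
  have : (∏ j, lam (j ∈ B) (n j) (k j)) * (a k * WD k (cellD A x)) - a k * WD k (cellD A x) =
      ((∏ j, lam (j ∈ B) (n j) (k j)) - 1) * a k * WD k (cellD A x) := by ring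
  rw [this, abs_mul, abs_mul, hW, mul_one]

theorem integrable_mean {d : ℕ} (B : Finset (Fin d)) (f : (Fin d → ℝ) → ℝ) (n : Fin d → ℕ) :
    Integrable (mixedLogMean B f n) (cubeMeasure d) := by
  have : mixedLogMean B f n = fun x => ∑ k ∈ Fintype.piFinset (fun i => Finset.range (n i)),
      (∏ j, lam (j ∈ B) (n j) (k j)) * walshCoef f k * ∏ i, walsh (k i) (x i) := by
    funext x; exact mean_eq B f n x
  rw [this]
  exact integrable_finsetSum _ fun k _ => integrable_walsh_prod k (integrable_const _)

/-- Theorem (normconv). For `f ∈ L log^{|B|} L(I^d)`, the mixed logarithmic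
means converge to `f` in `L^1(I^d)`-norm as `min_j n_j → ∞`. -/
theorem stmt1 (d : ℕ) (hd : 1 ≤ d) (B : Finset (Fin d)) (hB : B.Nonempty)
    (f : (Fin d → ℝ) → ℝ) (hf : Measurable f) (hfi : Integrable f (cubeMeasure d))
    (hfl : Integrable (fun x => |f x| * Real.log (1 + |f x|) ^ B.card) (cubeMeasure d)) :
    ∀ ε > (0:ℝ), ∃ N : ℕ, ∀ n : Fin d → ℕ, (∀ j, 2 ≤ n j) → (∀ j, N ≤ n j) →
      ∫ x, |mixedLogMean B f n x - f x| ∂(cubeMeasure d) < ε := by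
  intro ε hε
  obtain ⟨A, σ, hσ⟩ := step_approx B.card f hf hfi hfl (ε/4) (by positivity)
  set g : (Fin d → ℝ) → ℝ := fun x => σ (cellD A x) with hg
  have hgi : Integrable g (cubeMeasure d) := integrable_cell A σ
  obtain ⟨N, hN⟩ := poly_conv B A σ (ε/4) (by positivity)
  refine ⟨N, fun n hn hnN => ?_⟩
  obtain ⟨τ, hτ1, hτ2, hτ3, hτ4⟩ := key_bound B n hn (fun x => f x - g x) (hfi.sub hgi)
  have b1 : ∫ x, |mixedLogMean B (fun x => f x - g x) n x| ∂(cubeMeasure d) ≤ ε/4 :=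
    hτ4.trans (hσ τ ⟨hτ1, hτ2, hτ3⟩)
  have b2 : ∫ x, |f x - g x| ∂(cubeMeasure d) ≤ ε/4 := by
    have := hσ _ (good_one d B.card)
    simpa using this
  have i1 : Integrable (fun x => |mixedLogMean B (fun x => f x - g x) n x|) (cubeMeasure d) :=
    (integrable_mean B _ n).abs
  have i2 : Integrable (fun x => |f x - g x|) (cubeMeasure d) := (hfi.sub hgi).abs
  have i3 : Integrable (fun x => |mixedLogMean B (fun x => f x - g x) n x| + ε/4)
    (cubeMeasure d) := i1.add (integrable_const _)
  calc ∫ x, |mixedLogMean B f n x - f x| ∂(cubeMeasure d)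
      ≤ ∫ x, ((|mixedLogMean B (fun x => f x - g x) n x| + ε/4) + |f x - g x|)
          ∂(cubeMeasure d) := by
        refine integral_mono ((integrable_mean B f n).sub hfi).abs (i3.add i2) fun x => ?_
        have h1 := (hN n hnN x).le
        have h2 := mean_sub B f g hfi hgi n x
        simp only
        have e : mixedLogMean B f n x - f x = mixedLogMean B (fun x => f x - g x) n x +
            (mixedLogMean B g n x - g x) + (g x - f x) := by rw [h2]; ring
        rw [e, abs_sub_comm (f x)]
        refine (abs_add_three _ _ _).trans ?_
        gcongr
    _ = ∫ x, |mixedLogMean B (fun x => f x - g x) n x| ∂(cubeMeasure d) + ε/4 +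
          ∫ x, |f x - g x| ∂(cubeMeasure d) := by
        rw [integral_add i3 i2, integral_add i1 (integrable_const _)]
        simp
    _ ≤ ε/4 + ε/4 + ε/4 := by gcongr
    _ < ε := by linarith

end
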